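/- arXiv:2512.24913 — 2 statements merged into one kernel-verified Lean document; each statement's English description precedes it below -/
import Mathlib

section
/- For every integer d ≥ 3 and every γ ∈ [0, +∞] there exists a full-rank lattice Λ ⊂ ℝ^d with ω(Λ) = γ. In other words, the spectrum S_d = {ω(Λ) : Λ a d-dimensional lattice} equals the whole interval [0, +∞]. -/
/-!
For `γ = ∞` the lattice `ℤ^d` works. For finite `γ` write `d = k + 2` with `k ≥ 1`. The lattice
constructed below has a basis `(1, …, 1), α, b 0, …, b (k-1)`, where the first two vectors span a
rank two sublattice that realises the exponent `γ` and the remaining ones are generic.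

*The rank two sublattice.* Its points are `x = (p + α i * q)_i`. The slopes `α i` are separated by
at least `1`, so all coordinates of `x`, except possibly one, are comparable to `‖x‖`. The slope
`α 0` is a number whose exponent of approximation is exactly `τ = dγ + d - 1`
(`exists_slope`: a lacunary binary series), and the other slopes are badly approximable
(`sqrt_two_add_bad`). Hence the smallest coordinate is at least a constant times `‖x‖^(-τ)`, with
equality up to a constant infinitely often, which gives `∏ |x i| ≥ c ‖x‖^(d-1-τ) = c ‖x‖^(-dγ)`,
sharp infinitely often (`plane_lower`, `plane_upper`). The condition `k ≥ 1` gives `τ ≥ 2`,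
which the construction of `α 0` needs.

*The other points.* These are `x = z + ∑ j, t j • b j` with `z` in the rank two sublattice and
`t ∈ ℤ^k` nonzero. Fix a small `η > 0` and let `W(x) = ∏ |x i|^(η-1) (1+|x i|)^(-2η)`, which is
integrable on `ℝ^d` (`lintegral_weight_lt_top`). For fixed `t`, averaging `∑_z W(x)` over `b j` in a
ball, where `|t j| = ‖t‖`, gives `O(‖t‖^(-d) ‖t‖^2) = O(‖t‖^(-k))`. Thus
`∑_{t ≠ 0} ‖t‖^(-η) ∑_z W(x)` has finite integral over `b`, and it is finite for almost every `b`
(`ae_finite_sum`). For such a `b` all but finitely many terms are less than `1`, which forces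
`∏ |x i| ≥ c ‖x‖^(-O(η))` (`finite_bad_tail`). Letting `η` tend to `0`, these points contribute only
the exponent `0`, and the exponent of the lattice is `γ`.
-/

open MeasureTheory Filter Set

noncomputable section

/-- A full-rank lattice in `ℝ^d`: the set of integer linear combinations of a basis of `ℝ^d`. -/
def IsFullLattice {d : ℕ} (Λ : Set (Fin d → ℝ)) : Prop :=
  ∃ b : Fin d → (Fin d → ℝ), LinearIndependent ℝ b ∧
    Λ = {x | ∃ z : Fin d → ℤ, x = ∑ i, (z i : ℝ) • b i}

/-- The Diophantine exponent `ω(Λ) ∈ [0, +∞]` of a lattice `Λ ⊂ ℝ^d`: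
the supremum of all `γ ≥ 0` such that `Π(x) ≤ |x|^(-γ)` for infinitely many `x ∈ Λ`,
where `Π(x) = (∏ i |x i|)^(1/d)` and `|x| = ‖x‖` is the sup-norm. -/
def latticeExponent (d : ℕ) (Λ : Set (Fin d → ℝ)) : ENNReal :=
  sSup {g : ENNReal | ∃ γ : ℝ, 0 ≤ γ ∧ g = ENNReal.ofReal γ ∧
    {x : Fin d → ℝ | x ∈ Λ ∧ (∏ i, |x i|) ^ ((1 : ℝ) / d) ≤ ‖x‖ ^ (-γ)}.Infinite}

/-! ### An integrable weight detecting small products of coordinates -/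

/-- The function `|u|^(η-1) (1+|u|)^(-2η)` of one real variable: for `0 < η < 1` it is integrable on
`ℝ`, and it is at least `|u|⁻¹` up to factors `|u|^η`, `(1+|u|)^(-2η)` of small exponent. -/
def kernelFn (η u : ℝ) : ℝ := |u| ^ (η - 1) * (1 + |u|) ^ (-(2 * η))

lemma kernelFn_nonneg (η u : ℝ) : 0 ≤ kernelFn η u := by unfold kernelFn; positivity

lemma measurable_kernelFn (η : ℝ) : Measurable (kernelFn η) := by
  unfold kernelFn; fun_prop

lemma integrable_kernelFn {η : ℝ} (h0 : 0 < η) (h1 : η < 1) : Integrable (kernelFn η) := by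
  have key : IntegrableOn (kernelFn η) (Ioi 0) := by
    rw [← Ioc_union_Ioi_eq_Ioi (zero_le_one' ℝ)]
    refine IntegrableOn.union ?_ ?_
    · have h : IntegrableOn (fun u : ℝ => u ^ (η - 1)) (Ioc 0 1) := by
        have := intervalIntegral.intervalIntegrable_rpow' (a := 0) (b := 1) (r := η - 1)
          (by linarith)
        rwa [intervalIntegrable_iff_integrableOn_Ioc_of_le zero_le_one] at this
      refine Integrable.mono' h (measurable_kernelFn η).aestronglyMeasurable ?_
      refine (ae_restrict_iff' measurableSet_Ioc).2 (Eventually.of_forall fun u hu => ?_)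
      rw [Real.norm_of_nonneg (kernelFn_nonneg η u), kernelFn, abs_of_pos hu.1]
      have : (1 + u) ^ (-(2 * η)) ≤ 1 :=
        Real.rpow_le_one_of_one_le_of_nonpos (by linarith [hu.1]) (by linarith)
      exact mul_le_of_le_one_right (Real.rpow_nonneg hu.1.le _) this
    · have h : IntegrableOn (fun u : ℝ => u ^ (-1 - η)) (Ioi 1) :=
        integrableOn_Ioi_rpow_of_lt (by linarith) one_pos
      refine Integrable.mono' h (measurable_kernelFn η).aestronglyMeasurable ?_
      refine (ae_restrict_iff' measurableSet_Ioi).2 (Eventually.of_forall fun u hu => ?_)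
      have hu : (1 : ℝ) < u := hu
      have hu0 : 0 < u := by linarith
      rw [Real.norm_of_nonneg (kernelFn_nonneg η u), kernelFn, abs_of_pos hu0]
      have : (1 + u) ^ (-(2 * η)) ≤ u ^ (-(2 * η)) :=
        Real.rpow_le_rpow_of_nonpos hu0 (by linarith) (by linarith)
      calc _ ≤ u ^ (η - 1) * u ^ (-(2 * η)) := by gcongr
        _ = u ^ (-1 - η) := by rw [← Real.rpow_add hu0]; ring_nf
  have heven : ∀ u, kernelFn η (-u) = kernelFn η u := fun u => by simp [kernelFn]
  have key' : IntegrableOn (kernelFn η) (Iic 0) := by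
    rw [integrableOn_Iic_iff_integrableOn_Iio]
    have := ((Measure.measurePreserving_neg (volume : Measure ℝ)).integrableOn_comp_preimage
      (Homeomorph.neg ℝ).measurableEmbedding (f := kernelFn η) (s := Iio 0)).1
    refine this ?_
    have h1 : kernelFn η ∘ Neg.neg = kernelFn η := funext heven
    have h2 : (Neg.neg ⁻¹' Iio (0:ℝ)) = Ioi 0 := by ext; simp
    rw [h1, h2]
    exact key
  rw [← integrableOn_univ, ← Iic_union_Ioi (a := (0:ℝ))]
  exact key'.union key

open Classical in
/-- The product of `kernelFn η` over the coordinates, set to `⊤` where some coordinate vanishes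
(there `kernelFn η 0 = 0`, by the convention for real powers of `0`). A point whose weight is not
large therefore has a nonzero product of coordinates that is not too small. -/
def weight (n : ℕ) (η : ℝ) (x : Fin n → ℝ) : ENNReal :=
  if ∃ i, x i = 0 then ⊤ else ENNReal.ofReal (∏ i, kernelFn η (x i))

lemma measurable_weight (n : ℕ) (η : ℝ) : Measurable (weight n η) := by
  unfold weight
  refine Measurable.ite ?_ measurable_const ?_
  · have : {x : Fin n → ℝ | ∃ i, x i = 0} = ⋃ i, (fun x : Fin n → ℝ => x i) ⁻¹' {0} := by
      ext; simp
    rw [this]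
    exact MeasurableSet.iUnion fun i => measurable_pi_apply i (measurableSet_singleton 0)
  · refine ENNReal.measurable_ofReal.comp ?_
    exact Finset.measurable_fun_prod _ fun i _ =>
      (measurable_kernelFn η).comp (measurable_pi_apply i)

lemma lintegral_weight_lt_top (n : ℕ) {η : ℝ} (h0 : 0 < η) (h1 : η < 1) :
    ∫⁻ x, weight n η x < ⊤ := by
  have hone : Integrable (fun x : Fin n → ℝ => ∏ i, kernelFn η (x i)) :=
    Integrable.fintype_prod fun _ => integrable_kernelFn h0 h1
  have hae : (weight n η) =ᵐ[volume] fun x => ENNReal.ofReal (∏ i, kernelFn η (x i)) := by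
    have : ∀ᵐ x : Fin n → ℝ, ∀ i, x i ≠ 0 := by
      rw [ae_all_iff]
      intro i
      rw [ae_iff]
      simpa [volume_pi] using Measure.pi_hyperplane (fun _ : Fin n => (volume : Measure ℝ)) i 0
    filter_upwards [this] with x hx
    rw [weight, if_neg]
    push Not
    exact hx
  rw [lintegral_congr_ae hae]
  exact hone.lintegral_lt_top

/-! ### Averaging the weight over one translation vector -/

/-- An interval of radius `r` contains at most `2 r + 1` points of an arithmetic progression of step
at least `1`. -/
lemma tsum_indicator_le (a c r : ℝ) (ha : 1 ≤ |a|) (hr : 0 ≤ r) :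
    ∑' q : ℤ, (if |a * q - c| ≤ r then 1 else 0 : ENNReal) ≤ ENNReal.ofReal (2 * r + 1) := by
  have ha0 : a ≠ 0 := by intro h; simp [h] at ha; linarith
  set S : Finset ℤ := Finset.Icc ⌈c / a - r⌉ ⌊c / a + r⌋
  have hS : ∀ q : ℤ, |a * q - c| ≤ r → q ∈ S := by
    intro q hq
    have h2 : |(q:ℝ) - c / a| ≤ r := by
      have : a * q - c = a * (q - c / a) := by field_simp
      rw [this, abs_mul] at hq
      nlinarith [abs_nonneg ((q:ℝ) - c / a)]
    rw [abs_le] at h2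
    simp only [S, Finset.mem_Icc, Int.ceil_le, Int.le_floor]
    constructor <;> linarith
  rw [tsum_eq_sum (s := S)]
  · calc _ ≤ ∑ q ∈ S, (1 : ENNReal) := Finset.sum_le_sum fun q _ => by split_ifs <;> simp
      _ = (S.card : ENNReal) := by simp
      _ = ENNReal.ofReal (S.card : ℝ) := by simp
      _ ≤ _ := by
        apply ENNReal.ofReal_le_ofReal
        simp only [S, Int.card_Icc]
        have h1 := Int.floor_le (c / a + r)
        have h2 := Int.le_ceil (c / a - r)
        rcases le_total 0 (⌊c / a + r⌋ + 1 - ⌈c / a - r⌉) with h | h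
        · have : (((⌊c / a + r⌋ + 1 - ⌈c / a - r⌉).toNat : ℤ) : ℝ) = ((⌊c / a + r⌋ + 1 - ⌈c / a - r⌉ : ℤ) : ℝ) := by
            rw [Int.toNat_of_nonneg h]
          rw [Int.cast_natCast] at this
          rw [this]; push_cast; linarith
        · rw [Int.toNat_of_nonpos h]; simp; linarith
  · intro q hq
    rw [if_neg fun h => hq (hS q h)]

/-- A square of radius `r` contains `O((r+1)²)` points `(p + a₀ q, p + a₁ q)` with `p, q ∈ ℤ`. -/
lemma tsum_pair_indicator_le (a₀ a₁ c₀ c₁ r : ℝ) (ha : 1 ≤ |a₀ - a₁|) (hr : 0 ≤ r) :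
    ∑' z : ℤ × ℤ, (if |z.1 + a₀ * z.2 - c₀| ≤ r ∧ |z.1 + a₁ * z.2 - c₁| ≤ r then 1 else 0 : ENNReal)
      ≤ ENNReal.ofReal ((4 * r + 1) * (2 * r + 1)) := by
  calc _ ≤ ∑' z : ℤ × ℤ, (if |(a₀ - a₁) * z.2 - (c₀ - c₁)| ≤ 2 * r then 1 else 0 : ENNReal) *
        (if |1 * z.1 - (c₀ - a₀ * z.2)| ≤ r then 1 else 0 : ENNReal) := by
        refine ENNReal.tsum_le_tsum fun z => ?_
        split_ifs with h h1 h2 h2 <;> simp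
        · apply h2
          rw [show 1 * (z.1 : ℝ) - (c₀ - a₀ * z.2) = z.1 + a₀ * z.2 - c₀ by ring]
          exact h.1
        all_goals
          apply h1
          have := abs_sub (z.1 + a₀ * z.2 - c₀) (z.1 + a₁ * z.2 - c₁)
          rw [show (z.1 : ℝ) + a₀ * z.2 - c₀ - (z.1 + a₁ * z.2 - c₁)
            = (a₀ - a₁) * z.2 - (c₀ - c₁) by ring] at this
          linarith [h.1, h.2]
    _ = ∑' q : ℤ, (if |(a₀ - a₁) * q - (c₀ - c₁)| ≤ 2 * r then 1 else 0 : ENNReal) *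
        ∑' p : ℤ, (if |1 * p - (c₀ - a₀ * q)| ≤ r then 1 else 0 : ENNReal) := by
        rw [ENNReal.tsum_prod', ENNReal.tsum_comm]
        refine tsum_congr fun q => ?_
        by_cases h : |(a₀ - a₁) * q - (c₀ - c₁)| ≤ 2 * r <;> simp [h]
    _ ≤ ∑' q : ℤ, (if |(a₀ - a₁) * q - (c₀ - c₁)| ≤ 2 * r then 1 else 0 : ENNReal) *
        ENNReal.ofReal (2 * r + 1) := by
        refine ENNReal.tsum_le_tsum fun q => ?_
        gcongr
        exact tsum_indicator_le 1 _ r (by simp) hr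
    _ ≤ ENNReal.ofReal (2 * (2 * r) + 1) * ENNReal.ofReal (2 * r + 1) := by
        rw [ENNReal.tsum_mul_right]
        gcongr
        exact tsum_indicator_le _ _ _ ha (by linarith)
    _ = _ := by
        rw [← ENNReal.ofReal_mul (by linarith)]; ring_nf

/-- The average over `v` in a ball of the sum of `f` over the translates `A z + y + t v` is
`O(|t|^(-k)) ∫ f`: the substitution `x = A z + y + t v` has Jacobian `|t|^(k+2)`, and a given `x`
comes from `O(t²)` values of `z`. -/
lemma tsum_lintegral_le {k : ℕ} (f : (Fin (k+2) → ℝ) → ENNReal) (hf : Measurable f)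
    (A : ℤ × ℤ → Fin (k+2) → ℝ) (a₀ a₁ : ℝ) (ha : 1 ≤ |a₀ - a₁|)
    (hA0 : ∀ z, A z 0 = z.1 + a₀ * z.2) (hA1 : ∀ z, A z 1 = z.1 + a₁ * z.2)
    (c y : Fin (k+2) → ℝ) (t : ℝ) (ht : 1 ≤ |t|) :
    ∑' z, ∫⁻ v in Metric.closedBall c 1, f (A z + (y + t • v)) ≤
      ENNReal.ofReal (15 * |t| ^ (-(k:ℝ))) * ∫⁻ x, f x := by
  have ht0 : t ≠ 0 := by intro h; simp [h] at ht; linarith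
  have hcb : MeasurableSet (Metric.closedBall c 1) := Metric.isClosed_closedBall.measurableSet
  set s := Metric.closedBall c 1 with hs
  have step : ∀ z, ∫⁻ v in s, f (A z + (y + t • v)) =
      ENNReal.ofReal |t ^ (k+2)|⁻¹ * ∫⁻ x, s.indicator 1 (t⁻¹ • (x - A z - y)) * f x := by
    intro z
    have h1 : ∫⁻ v in s, f (A z + (y + t • v)) =
        ∫⁻ v, (fun w => s.indicator 1 (t⁻¹ • w) * f (A z + (y + w))) (t • v) := by
      rw [← lintegral_indicator hcb]
      congr 1; ext v
      simp only [inv_smul_smul₀ ht0]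
      by_cases hv : v ∈ s <;> simp [hv]
    have hi : Measurable (s.indicator (1 : (Fin (k+2) → ℝ) → ENNReal)) :=
      measurable_one.indicator hcb
    have hm : Measurable (fun w => s.indicator 1 (t⁻¹ • w) * f (A z + (y + w))) := by
      refine Measurable.mul (hi.comp (by fun_prop)) (hf.comp (by fun_prop))
    rw [h1, ← lintegral_map hm (measurable_const_smul t), Measure.map_addHaar_smul _ ht0,
      lintegral_smul_measure]
    simp only [Module.finrank_fintype_fun_eq_card, Fintype.card_fin, abs_inv, smul_eq_mul]
    congr 1
    rw [← lintegral_sub_right_eq_self _ (A z + y)]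
    congr 1; ext x
    rw [show A z + (y + (x - (A z + y))) = x by ext i; simp; ring,
      show x - (A z + y) = x - A z - y by ext i; simp; ring]
  simp_rw [step]
  rw [ENNReal.tsum_mul_left, ← lintegral_tsum]
  swap
  · intro z
    refine Measurable.aemeasurable (Measurable.mul ((measurable_one.indicator hcb).comp (by fun_prop)) hf)
  have bound : ∀ x, ∑' z, s.indicator (1 : (Fin (k+2) → ℝ) → ENNReal) (t⁻¹ • (x - A z - y)) * f x ≤
      ENNReal.ofReal (15 * t ^ 2) * f x := by
    intro x
    rw [ENNReal.tsum_mul_right]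
    gcongr
    calc _ ≤ ∑' z : ℤ × ℤ, (if |z.1 + a₀ * z.2 - (x 0 - y 0 - t * c 0)| ≤ |t| ∧
            |z.1 + a₁ * z.2 - (x 1 - y 1 - t * c 1)| ≤ |t| then 1 else 0 : ENNReal) := by
          refine ENNReal.tsum_le_tsum fun z => ?_
          by_cases h : t⁻¹ • (x - A z - y) ∈ s
          · have hc : ∀ i, |A z i - (x i - y i - t * c i)| ≤ |t| := by
              intro i
              rw [hs, mem_closedBall_iff_norm, pi_norm_le_iff_of_nonneg zero_le_one] at h
              have := h i
              simp only [Pi.sub_apply, Pi.smul_apply, smul_eq_mul, Real.norm_eq_abs] at this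
              have e : A z i - (x i - y i - t * c i) =
                - (t * (t⁻¹ * (x i - A z i - y i) - c i)) := by field_simp; ring
              rw [e, abs_neg, abs_mul]
              exact mul_le_of_le_one_right (abs_nonneg _) this
            have h0 := hc 0
            have h1 := hc 1
            rw [hA0] at h0
            rw [hA1] at h1
            rw [if_pos ⟨h0, h1⟩]
            simp [h]
          · simp [h]
      _ ≤ ENNReal.ofReal ((4 * |t| + 1) * (2 * |t| + 1)) :=
          tsum_pair_indicator_le _ _ _ _ _ ha (abs_nonneg t)
      _ ≤ _ := by
          apply ENNReal.ofReal_le_ofReal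
          rw [← sq_abs]; nlinarith
  calc _ ≤ ENNReal.ofReal |t ^ (k+2)|⁻¹ * ∫⁻ x, ENNReal.ofReal (15 * t ^ 2) * f x := by
        gcongr with x; exact bound x
    _ = _ := by
        rw [lintegral_const_mul _ hf, ← mul_assoc, ← ENNReal.ofReal_mul (by positivity)]
        congr 2
        have : |t| ≠ 0 := abs_ne_zero.2 ht0
        rw [Real.rpow_neg (abs_nonneg t), Real.rpow_natCast, abs_pow, ← sq_abs t]
        field_simp
        ring

lemma summable_norm_int_rpow (k : ℕ) (r : ℝ) (hr : r < -(k:ℝ)) :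
    Summable fun t : Fin k → ℤ => ‖t‖ ^ r := by
  let b := Pi.basisFun ℝ (Fin k)
  let L := Submodule.span ℤ (Set.range b)
  have hfin : Module.finrank ℤ L = k := by
    rw [ZLattice.rank ℝ L]; simp
  have hs := ZLattice.summable_norm_rpow L r (by rw [hfin]; exact hr)
  let φ : (Fin k → ℤ) → L := fun t => ⟨fun i => (t i : ℝ), by
    rw [show (fun i => (t i : ℝ)) = ∑ i, t i • b i by
      ext j; simp [b, Finset.sum_apply, Pi.single_apply]]
    exact Submodule.sum_mem _ fun i _ => Submodule.smul_mem _ _ (Submodule.subset_span ⟨i, rfl⟩)⟩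
  have hφ : Function.Injective φ := by
    intro t t' h
    have := congrArg Subtype.val h
    ext i
    have := congrFun this i
    simpa [φ] using this
  refine (hs.comp_injective hφ).congr fun t => ?_
  simp only [Function.comp, φ]
  congr 1

/-! ### Almost every choice of the last `k` basis vectors -/

/-- The point `p (1, …, 1) + q α` of the rank two lattice spanned by `(1, …, 1)` and `α`, where
`z = (p, q)`. -/
def planePt {k : ℕ} (α : Fin (k+2) → ℝ) (z : ℤ × ℤ) : Fin (k+2) → ℝ :=
  fun i => z.1 + α i * z.2

/-- Lebesgue measure on `k`-tuples of vectors of `ℝ^(k+2)`, restricted to those whose `j`-th vector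
lies in the unit ball around `c j`. -/
def boxMeasure (k : ℕ) (c : Fin k → Fin (k+2) → ℝ) : Measure (Fin k → Fin (k+2) → ℝ) :=
  Measure.pi fun j => volume.restrict (Metric.closedBall (c j) 1)

/-- A uniform bound for the integrals in one vector, the others being fixed, bounds the integral over
all tuples; `2 ^ n` is the volume of a unit ball for the sup norm. -/
lemma lintegral_pi_le {k n : ℕ} (c : Fin k → Fin n → ℝ) (H : (Fin k → Fin n → ℝ) → ENNReal)
    (hH : Measurable H) (j : Fin k) (C : ENNReal)
    (h : ∀ b, ∫⁻ v in Metric.closedBall (c j) 1, H (Function.update b j v) ≤ C) :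
    ∫⁻ b, H b ∂(Measure.pi fun j => volume.restrict (Metric.closedBall (c j) 1)) ≤
      C * ENNReal.ofReal (2 ^ n) ^ (k - 1) := by
  rw [lintegral_eq_lmarginal_univ c, lmarginal_erase' _ hH (Finset.mem_univ j)]
  refine (lmarginal_mono (g := fun _ => C) (fun b => h b) c).trans ?_
  simp only [lmarginal, lintegral_const, Measure.pi_univ, Measure.restrict_apply_univ]
  gcongr
  refine le_of_eq ?_
  simp [Real.volume_pi_closedBall]

/-- Averaging over the vector `b j` with `|t j| = ‖t‖` gives the saving `‖t‖^(-k)`. -/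
lemma lintegral_tail_le {k : ℕ} (f : (Fin (k+2) → ℝ) → ENNReal) (hf : Measurable f)
    (α : Fin (k+2) → ℝ) (ha : 1 ≤ |α 0 - α 1|) (c : Fin k → Fin (k+2) → ℝ)
    (t : Fin k → ℤ) (ht : t ≠ 0) :
    ∫⁻ b, (∑' z, f (planePt α z + ∑ j, (t j : ℝ) • b j)) ∂boxMeasure k c ≤
      ENNReal.ofReal (15 * ‖t‖ ^ (-(k:ℝ))) * (∫⁻ x, f x) * ENNReal.ofReal (2 ^ (k+2)) ^ (k - 1) := by
  have : Nonempty (Fin k) := by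
    by_contra hne
    rw [not_nonempty_iff] at hne
    exact ht (Subsingleton.elim _ _)
  obtain ⟨j, -, hj⟩ := Finset.exists_max_image Finset.univ (fun j => |(t j : ℝ)|)
    Finset.univ_nonempty
  have hjn : ‖t‖ = |(t j : ℝ)| := by
    apply le_antisymm
    · rw [pi_norm_le_iff_of_nonneg (abs_nonneg _)]
      intro i
      rw [Int.norm_eq_abs]
      exact hj i (Finset.mem_univ i)
    · rw [← Int.norm_eq_abs]; exact norm_le_pi_norm t j
  have ht1 : 1 ≤ |(t j : ℝ)| := by
    have h0 : t j ≠ 0 := by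
      intro h
      rw [h, Int.cast_zero, abs_zero, norm_eq_zero] at hjn
      exact ht hjn
    exact_mod_cast Int.one_le_abs h0
  refine lintegral_pi_le c _ ?_ j _ ?_
  · exact Measurable.tsum fun z => hf.comp (by fun_prop)
  · intro b
    have e : ∀ v z, planePt α z + ∑ i, (t i : ℝ) • Function.update b j v i =
        planePt α z + ((∑ i ∈ Finset.univ.erase j, (t i : ℝ) • b i) + (t j : ℝ) • v) := by
      intro v z
      congr 1
      rw [← Finset.sum_erase_add _ _ (Finset.mem_univ j)]
      congr 1
      · refine Finset.sum_congr rfl fun i hi => ?_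
        rw [Function.update_of_ne (Finset.ne_of_mem_erase hi)]
      · simp
    simp_rw [e]
    rw [lintegral_tsum, hjn]
    swap
    · intro z
      refine Measurable.aemeasurable (hf.comp ?_)
      fun_prop
    exact tsum_lintegral_le f hf (planePt α) (α 0) (α 1) ha (fun z => rfl) (fun z => rfl)
      (c j) _ _ ht1

/-- For almost every tuple `b`, the weights of the lattice points with `t ≠ 0`, damped by
`‖t‖^(-η)`, are summable: the integral over `b` is at most a constant times
`∑ ‖t‖^(-k-η)`, a sum over `ℤ^k`. -/
lemma ae_finite_sum {k : ℕ} {η : ℝ} (h0 : 0 < η) (h1 : η < 1)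
    (α : Fin (k+2) → ℝ) (ha : 1 ≤ |α 0 - α 1|) (c : Fin k → Fin (k+2) → ℝ) :
    ∀ᵐ b ∂boxMeasure k c, ∑' t : {t : Fin k → ℤ // t ≠ 0}, ∑' z,
      ENNReal.ofReal (‖t.1‖ ^ (-η)) * weight (k+2) η (planePt α z + ∑ j, (t.1 j : ℝ) • b j) < ⊤ := by
  have hw := measurable_weight (k+2) η
  have hm : ∀ t : {t : Fin k → ℤ // t ≠ 0}, Measurable fun b : Fin k → Fin (k+2) → ℝ =>
      ∑' z, weight (k+2) η (planePt α z + ∑ j, (t.1 j : ℝ) • b j) :=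
    fun t => Measurable.tsum fun z => hw.comp (by fun_prop)
  simp_rw [ENNReal.tsum_mul_left]
  refine ae_lt_top (Measurable.tsum fun t => (hm t).const_mul _) ?_
  rw [lintegral_tsum fun t => ((hm t).const_mul _).aemeasurable]
  set I := ∫⁻ x, weight (k+2) η x
  set D := ENNReal.ofReal (2 ^ (k+2)) ^ (k - 1)
  have hsum := summable_norm_int_rpow k (-(k:ℝ) - η) (by linarith)
  refine ne_top_of_le_ne_top (b := ∑' t : {t : Fin k → ℤ // t ≠ 0},
    ENNReal.ofReal (‖t.1‖ ^ (-(k:ℝ) - η)) * (15 * I * D)) ?_ (ENNReal.tsum_le_tsum fun t => ?_)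
  · rw [ENNReal.tsum_mul_right]
    refine ENNReal.mul_ne_top ?_ ?_
    · exact (hsum.subtype _).tsum_ofReal_ne_top
    · refine ENNReal.mul_ne_top (ENNReal.mul_ne_top (by simp) ?_) (ENNReal.pow_ne_top (by simp))
      exact (lintegral_weight_lt_top _ h0 h1).ne
  · rw [lintegral_const_mul _ (hm t)]
    have hpos : 0 < ‖t.1‖ := norm_pos_iff.2 t.2
    calc _ ≤ ENNReal.ofReal (‖t.1‖ ^ (-η)) * (ENNReal.ofReal (15 * ‖t.1‖ ^ (-(k:ℝ))) * I * D) := by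
          gcongr
          exact lintegral_tail_le _ hw α ha c t.1 t.2
      _ = _ := by
          rw [sub_eq_add_neg, Real.rpow_add hpos, ENNReal.ofReal_mul (by positivity),
            ENNReal.ofReal_mul (by positivity), show ENNReal.ofReal 15 = 15 by simp]
          ring

/-! ### From logarithmic estimates to the exponent -/

/-- If the damped weight of `x` is less than `1`, then `∏ |x i|` is at least a constant times
`‖x‖^(-O(η))`. -/
lemma log_prod_ge_of_weight {n : ℕ} {η C w : ℝ} (h0 : 0 < η) (h1 : η ≤ 1 / 2) (hC : 1 ≤ C)
    (x : Fin n → ℝ) (hx : 1 ≤ ‖x‖) (hw : 0 < w) (hwC : w ≤ C * ‖x‖)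
    (h : ENNReal.ofReal (w ^ (-η)) * weight n η x < 1) :
    0 < ∏ i, |x i| ∧
      -(Real.log C + 2 * n * Real.log 2) - 2 * (2 * n + 1) * η * Real.log ‖x‖ ≤
        Real.log (∏ i, |x i|) := by
  have hwpos : 0 < w ^ (-η) := Real.rpow_pos_of_pos hw _
  have hne : ∀ i, x i ≠ 0 := by
    by_contra hcon
    push Not at hcon
    rw [weight, if_pos hcon, ENNReal.mul_top (by simpa using hwpos)] at h
    simp at h
  have habs : ∀ i, 0 < |x i| := fun i => abs_pos.2 (hne i)
  refine ⟨Finset.prod_pos fun i _ => habs i, ?_⟩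
  rw [weight, if_neg (by push Not; exact hne), ← ENNReal.ofReal_mul hwpos.le,
    ENNReal.ofReal_lt_one] at h
  have hker : ∀ i, 0 < kernelFn η (x i) := fun i =>
    mul_pos (Real.rpow_pos_of_pos (habs i) _) (Real.rpow_pos_of_pos (by positivity) _)
  have hlog : Real.log (w ^ (-η) * ∏ i, kernelFn η (x i)) ≤ 0 :=
    Real.log_nonpos (mul_nonneg hwpos.le (Finset.prod_nonneg fun i _ => (hker i).le)) h.le
  rw [Real.log_mul hwpos.ne' (Finset.prod_pos fun i _ => hker i).ne', Real.log_rpow hw,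
    Real.log_prod fun i _ => (hker i).ne'] at hlog
  have hk : ∀ i, Real.log (kernelFn η (x i)) =
      (η - 1) * Real.log |x i| - 2 * η * Real.log (1 + |x i|) := by
    intro i
    have : 0 < 1 + |x i| := by positivity
    rw [kernelFn, Real.log_mul (Real.rpow_pos_of_pos (habs i) _).ne'
      (Real.rpow_pos_of_pos this _).ne', Real.log_rpow (habs i), Real.log_rpow this]
    ring
  simp_rw [hk] at hlog
  rw [Finset.sum_sub_distrib, ← Finset.mul_sum, ← Finset.mul_sum,
    ← Real.log_prod fun i _ => (habs i).ne'] at hlog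
  set p := Real.log (∏ i, |x i|)
  set l := Real.log ‖x‖
  have hl : 0 ≤ l := Real.log_nonneg hx
  have hx0 : 0 < ‖x‖ := by linarith
  have hlw : Real.log w ≤ Real.log C + l := by
    rw [← Real.log_mul (by positivity) hx0.ne']
    exact Real.log_le_log hw hwC
  have hs : ∑ i, Real.log (1 + |x i|) ≤ n * (Real.log 2 + l) := by
    calc _ ≤ ∑ _i : Fin n, (Real.log 2 + l) := by
          refine Finset.sum_le_sum fun i _ => ?_
          rw [← Real.log_mul (by norm_num) hx0.ne']
          refine Real.log_le_log (by positivity) ?_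
          have := norm_le_pi_norm x i
          rw [Real.norm_eq_abs] at this
          linarith
      _ = _ := by simp; ring
  have hlC : 0 ≤ Real.log C := Real.log_nonneg hC
  have hl2 : 0 ≤ Real.log 2 := Real.log_nonneg (by norm_num)
  have hn : (0:ℝ) ≤ n := Nat.cast_nonneg n
  have h3 : (1 - η) * p ≥ -(η * (Real.log C + l)) - 2 * η * (n * (Real.log 2 + l)) := by
    have a1 := mul_le_mul_of_nonneg_left hlw h0.le
    have a2 := mul_le_mul_of_nonneg_left hs (by linarith : 0 ≤ 2 * η)
    nlinarith
  have b1 : 0 ≤ (n:ℝ) * Real.log 2 := mul_nonneg hn hl2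
  have b2 : 0 ≤ (2 * n + 1) * η * l := by positivity
  rcases le_or_gt 0 p with hp | hp
  · linarith
  · have h4 : (1 - η) * p ≤ p / 2 := by nlinarith
    have h5 : η * Real.log C ≤ Real.log C / 2 := by nlinarith
    have h6 : η * (n * Real.log 2) ≤ (n * Real.log 2) / 2 := by nlinarith
    linarith

/-- The exponent is at most `γ` if, for every `δ > 0`, all but finitely many lattice points satisfy
`∏ |x i| ≥ e^(-K) ‖x‖^(-dγ-δ)`. -/
lemma latticeExponent_le {d : ℕ} (hd : 0 < d) {Λ : Set (Fin d → ℝ)} {γ : ℝ}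
    (hdisc : ∀ R, {x | x ∈ Λ ∧ ‖x‖ ≤ R}.Finite)
    (h : ∀ δ > 0, ∃ K, {x | x ∈ Λ ∧ ¬(1 ≤ ‖x‖ → 0 < ∏ i, |x i| ∧
      -K - (d * γ + δ) * Real.log ‖x‖ ≤ Real.log (∏ i, |x i|))}.Finite) :
    latticeExponent d Λ ≤ ENNReal.ofReal γ := by
  refine sSup_le ?_
  rintro _ ⟨g, hg, rfl, hinf⟩
  apply ENNReal.ofReal_le_ofReal
  by_contra hlt
  push Not at hlt
  have hd' : (0:ℝ) < d := by exact_mod_cast hd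
  set δ := d * (g - γ) / 2 with hδ
  have hδ0 : 0 < δ := by have : 0 < g - γ := by linarith
                         positivity
  obtain ⟨K, hK⟩ := h δ hδ0
  refine hinf ((hK.union (hdisc (max 1 (Real.exp (K / δ))))).subset ?_)
  rintro x ⟨hxΛ, hx⟩
  by_cases hgood : 1 ≤ ‖x‖ → 0 < ∏ i, |x i| ∧
      -K - (d * γ + δ) * Real.log ‖x‖ ≤ Real.log (∏ i, |x i|)
  · right
    refine ⟨hxΛ, ?_⟩
    by_cases hx1 : 1 ≤ ‖x‖
    · obtain ⟨hP, hlog⟩ := hgood hx1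
      have hx0 : 0 < ‖x‖ := by linarith
      have h2 := Real.log_le_log (Real.rpow_pos_of_pos hP _) hx
      rw [Real.log_rpow hP, Real.log_rpow hx0] at h2
      have h3 : Real.log (∏ i, |x i|) ≤ -(d * g) * Real.log ‖x‖ := by
        have := mul_le_mul_of_nonneg_left h2 hd'.le
        rw [← mul_assoc, mul_one_div_cancel hd'.ne', one_mul] at this
        linarith
      have h4 : δ * Real.log ‖x‖ ≤ K := by
        have : d * g = d * γ + 2 * δ := by rw [hδ]; ring
        rw [this] at h3
        linarith
      refine le_max_of_le_right ?_
      rw [← Real.log_le_iff_le_exp hx0, le_div_iff₀ hδ0]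
      linarith
    · exact le_max_of_le_left (not_le.1 hx1).le
  · left; exact ⟨hxΛ, hgood⟩

/-- The exponent is at least `γ` if infinitely many lattice points satisfy
`∏ |x i| ≤ e^K ‖x‖^(-dγ)`: the constant is absorbed by passing to a smaller exponent. -/
lemma le_latticeExponent {d : ℕ} (hd : 0 < d) {Λ : Set (Fin d → ℝ)} {γ : ℝ}
    (hdisc : ∀ R, {x | x ∈ Λ ∧ ‖x‖ ≤ R}.Finite) (K : ℝ)
    (h : {x | x ∈ Λ ∧ 1 ≤ ‖x‖ ∧ 0 < ∏ i, |x i| ∧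
      Real.log (∏ i, |x i|) ≤ K - d * γ * Real.log ‖x‖}.Infinite) :
    ENNReal.ofReal γ ≤ latticeExponent d Λ := by
  have hd' : (0:ℝ) < d := by exact_mod_cast hd
  refine le_of_forall_lt fun r hr => ?_
  have hr' : r ≠ ⊤ := hr.ne_top
  obtain ⟨g, hrg, hg⟩ := exists_between hr
  have hg' : g ≠ ⊤ := hg.ne_top
  refine hrg.trans_le (le_sSup ⟨g.toReal, ENNReal.toReal_nonneg, (ENNReal.ofReal_toReal hg').symm, ?_⟩)
  have hgγ : g.toReal < γ := by
    by_contra hcon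
    push Not at hcon
    have := ENNReal.ofReal_le_ofReal hcon
    rw [ENNReal.ofReal_toReal hg'] at this
    exact absurd hg (not_lt.2 this)
  set g' := g.toReal
  have hδ0 : 0 < d * (γ - g') := mul_pos hd' (by linarith)
  refine (h.sdiff (hdisc (Real.exp (K / (d * (γ - g')))))).mono ?_
  rintro x ⟨⟨hxΛ, hx1, hP, hlog⟩, hx2⟩
  refine ⟨hxΛ, ?_⟩
  have hx0 : 0 < ‖x‖ := by linarith
  have h3 : Real.exp (K / (d * (γ - g'))) < ‖x‖ := by
    by_contra hcon
    exact hx2 ⟨hxΛ, not_lt.1 hcon⟩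
  rw [← Real.lt_log_iff_exp_lt hx0, div_lt_iff₀ hδ0] at h3
  rw [← Real.log_le_log_iff (Real.rpow_pos_of_pos hP _) (Real.rpow_pos_of_pos hx0 _),
    Real.log_rpow hP, Real.log_rpow hx0, one_div, inv_mul_le_iff₀ hd']
  nlinarith

/-- The lattice `ℤ^d` has infinite exponent: the points `(n, 0, …, 0)` have a zero coordinate. -/
lemma exists_latticeExponent_eq_top (d : ℕ) (hd : 2 ≤ d) :
    ∃ Λ : Set (Fin d → ℝ), IsFullLattice Λ ∧ latticeExponent d Λ = ⊤ := by
  refine ⟨_, ⟨Pi.basisFun ℝ (Fin d), (Pi.basisFun ℝ (Fin d)).linearIndependent, rfl⟩, ?_⟩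
  refine ENNReal.eq_top_of_forall_nnreal_le fun r => ?_
  refine le_sSup ⟨r, r.2, by simp, ?_⟩
  let i₀ : Fin d := ⟨0, by omega⟩
  let i₁ : Fin d := ⟨1, by omega⟩
  have hinj : Function.Injective fun n : ℕ => (Pi.single i₀ (n:ℝ) : Fin d → ℝ) := by
    intro n m h
    have := congrFun h i₀
    simpa using this
  refine (Set.infinite_range_of_injective hinj).mono ?_
  rintro _ ⟨n, rfl⟩
  refine ⟨⟨Pi.single i₀ (n:ℤ), ?_⟩, ?_⟩
  · ext j
    simp only [Pi.basisFun_apply, Finset.sum_apply, Pi.smul_apply, smul_eq_mul]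
    simp only [Pi.single_apply, mul_ite, mul_one, mul_zero, Finset.sum_ite_eq, Finset.mem_univ,
      if_true]
    split_ifs <;> simp
  · have hz : ∏ i, |(Pi.single i₀ (n:ℝ) : Fin d → ℝ) i| = 0 := by
      refine Finset.prod_eq_zero (Finset.mem_univ i₁) ?_
      have : i₁ ≠ i₀ := by simp [i₀, i₁]
      simp [Pi.single_eq_of_ne this]
    dsimp only
    rw [hz, Real.zero_rpow (by positivity)]
    positivity

/-! ### A slope with prescribed approximation exponent -/

/-- The exponents `n 0 < n 1 < …` in the slope `∑ 2^(-n k)`: `n 0 = 1` and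
`n (k+1) = ⌈(τ+1) n k⌉`. -/
def expSeq (τ : ℝ) : ℕ → ℕ
  | 0 => 1
  | k + 1 => ⌈(τ + 1) * expSeq τ k⌉₊

/-- The numerator of the partial sum `∑_{j ≤ k} 2^(-n j)` over the denominator `2^(n k)`. -/
def numSeq (τ : ℝ) : ℕ → ℤ
  | 0 => 1
  | k + 1 => 2 ^ (expSeq τ (k + 1) - expSeq τ k) * numSeq τ k + 1

lemma expSeq_pos {τ : ℝ} (hτ : 2 ≤ τ) (k : ℕ) : 1 ≤ expSeq τ k := by
  induction k with
  | zero => simp [expSeq]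
  | succ k ih =>
    rw [expSeq, Nat.one_le_ceil_iff]
    have : (1:ℝ) ≤ expSeq τ k := by exact_mod_cast ih
    nlinarith

lemma expSeq_lt {τ : ℝ} (hτ : 2 ≤ τ) (k : ℕ) : expSeq τ k < expSeq τ (k + 1) := by
  rw [expSeq, Nat.lt_ceil]
  have : (1:ℝ) ≤ expSeq τ k := by exact_mod_cast expSeq_pos hτ k
  nlinarith

lemma odd_numSeq {τ : ℝ} (hτ : 2 ≤ τ) (k : ℕ) : Odd (numSeq τ k) := by
  cases k with
  | zero => simp [numSeq]
  | succ k =>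
    rw [numSeq]
    refine Even.add_one (Even.mul_right ?_ _)
    exact (even_two (α := ℤ)).pow_of_ne_zero (by have := expSeq_lt hτ k; omega)

/-- There is `α ∈ [0, 1]` whose exponent of approximation by rationals is exactly `τ`, up to constant
factors. The number `α = ∑ 2^(-n k)` with `n (k+1) ≈ (τ+1) n k` works: its partial sums are odd
multiples of `1 / Q k` with `Q k = 2^(n k)`, at distance about `1 / Q (k+1) ≈ (Q k)^(-τ-1)` from `α`,
and every other fraction is controlled by comparison with the first partial sum for which
`4 q Q k ≤ Q (k+1)`. -/
lemma exists_slope (τ : ℝ) (hτ : 2 ≤ τ) :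
    ∃ α : ℝ, 0 ≤ α ∧ α ≤ 1 ∧
      (∀ p q : ℤ, q ≠ 0 → 1 / 16 * |(q:ℝ)| ^ (-τ) ≤ |p + α * q|) ∧
      ∀ N : ℕ, ∃ p q : ℤ, (N:ℤ) ≤ q ∧ 1 ≤ q ∧ |p + α * q| ≤ 2 * (q:ℝ) ^ (-τ) := by
  set n := expSeq τ
  have hmono : StrictMono n := strictMono_nat_of_lt_succ (expSeq_lt hτ)
  have hge : ∀ j k, n k + j ≤ n (j + k) := by
    intro j k
    induction j with
    | zero => simp
    | succ j ih =>
      have := expSeq_lt hτ (j + k)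
      rw [show j + 1 + k = j + k + 1 by ring]
      change n (j + k) < n (j + k + 1) at this
      omega
  have hdom : ∀ k j, (1 / 2 : ℝ) ^ n (j + k) ≤ (1 / 2) ^ n k * (1 / 2) ^ j := by
    intro k j
    rw [← pow_add]
    exact pow_le_pow_of_le_one (by norm_num) (by norm_num) (hge j k)
  have hsum0 : ∀ k, Summable fun j => (1 / 2 : ℝ) ^ n (j + k) := fun k =>
    Summable.of_nonneg_of_le (fun j => by positivity) (hdom k)
      (summable_geometric_two.mul_left _)
  have htail_le : ∀ k, ∑' j, (1 / 2 : ℝ) ^ n (j + k) ≤ 2 * (1 / 2) ^ n k := by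
    intro k
    calc _ ≤ ∑' j, (1 / 2 : ℝ) ^ n k * (1 / 2) ^ j :=
          (hsum0 k).tsum_le_tsum (hdom k) (summable_geometric_two.mul_left _)
      _ = _ := by rw [tsum_mul_left, tsum_geometric_two]; ring
  have htail_ge : ∀ k, (1 / 2 : ℝ) ^ n k ≤ ∑' j, (1 / 2 : ℝ) ^ n (j + k) := by
    intro k
    have := (hsum0 k).le_tsum 0 fun j _ => by positivity
    simpa using this
  set α := ∑' j, (1 / 2 : ℝ) ^ n j with hα
  set Q : ℕ → ℝ := fun k => (2:ℝ) ^ n k with hQ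
  have hQ1 : ∀ k, 1 ≤ Q k := fun k => one_le_pow₀ (by norm_num)
  have hQ0 : ∀ k, 0 < Q k := fun k => by linarith [hQ1 k]
  have hpart : ∀ k, ∑ j ∈ Finset.range (k + 1), (1 / 2 : ℝ) ^ n j = numSeq τ k / Q k := by
    intro k
    induction k with
    | zero => simp [n, hQ, numSeq, expSeq]
    | succ k ih =>
      rw [Finset.sum_range_succ, ih, numSeq]
      have h1 : Q (k + 1) = 2 ^ (n (k + 1) - n k) * Q k := by
        rw [hQ]; simp only
        rw [← pow_add, Nat.sub_add_cancel (expSeq_lt hτ k).le]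
      have h2 : (1 / 2 : ℝ) ^ n (k + 1) = 1 / Q (k + 1) := by simp [hQ]
      have := (hQ0 k).ne'
      rw [h2, h1]
      push_cast
      field_simp
      rfl
  have hαk : ∀ k, α = numSeq τ k / Q k + ∑' j, (1 / 2 : ℝ) ^ n (j + (k + 1)) := by
    intro k
    rw [← hpart k, hα]
    exact ((hsum0 0).sum_add_tsum_nat_add (k + 1)).symm
  have hinv : ∀ k, (1 / 2 : ℝ) ^ n k = 1 / Q k := fun k => by simp [hQ]
  have hlo : ∀ k, 1 / Q (k + 1) ≤ α - numSeq τ k / Q k := by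
    intro k
    have := htail_ge (k + 1)
    rw [hinv] at this
    linarith [hαk k]
  have hhi : ∀ k, α - numSeq τ k / Q k ≤ 2 / Q (k + 1) := by
    intro k
    have := htail_le (k + 1)
    rw [hinv] at this
    have e : 2 / Q (k+1) = 2 * (1 / Q (k+1)) := by ring
    linarith [hαk k]
  have hQlo : ∀ k, Q k ^ (τ + 1) ≤ Q (k + 1) := by
    intro k
    simp only [hQ]
    rw [← Real.rpow_natCast, ← Real.rpow_natCast, ← Real.rpow_mul (by norm_num)]
    apply Real.rpow_le_rpow_of_exponent_le (by norm_num)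
    have := Nat.le_ceil ((τ + 1) * (n k : ℝ))
    rw [mul_comm]
    exact this
  have hQhi : ∀ k, Q (k + 1) ≤ 2 * Q k ^ (τ + 1) := by
    intro k
    simp only [hQ]
    have : (2:ℝ) * ((2:ℝ) ^ n k) ^ (τ + 1) = (2:ℝ) ^ (1 + n k * (τ + 1)) := by
      rw [Real.rpow_add (show (0:ℝ) < 2 by norm_num) 1 ((n k:ℝ) * (τ + 1)), Real.rpow_one,
        Real.rpow_mul (by norm_num), Real.rpow_natCast]
    rw [this, ← Real.rpow_natCast]
    apply Real.rpow_le_rpow_of_exponent_le (by norm_num)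
    have h := Nat.ceil_lt_add_one (a := (τ + 1) * (n k : ℝ)) (by positivity)
    have h' : ((n (k + 1) : ℕ) : ℝ) = ⌈(τ + 1) * (n k : ℝ)⌉₊ := rfl
    rw [h']
    linarith
  have hn_ge : ∀ k, k ≤ n k := fun k => hmono.le_apply
  have hQk : ∀ k : ℕ, (k:ℝ) ≤ Q k := by
    intro k
    have h1 : k < 2 ^ k := Nat.lt_two_pow_self
    have h2 : (2:ℝ) ^ k ≤ Q k := pow_le_pow_right₀ (by norm_num) (hn_ge k)
    have h3 : (k:ℝ) < 2 ^ k := by exact_mod_cast h1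
    linarith
  have hsplit : ∀ k, Q k ^ (τ + 1) = Q k ^ τ * Q k := fun k => by
    rw [Real.rpow_add (hQ0 k), Real.rpow_one]
  have hsq : ∀ x : ℝ, 1 ≤ x → x ^ 2 ≤ x ^ τ := fun x hx => by
    rw [← Real.rpow_natCast]
    exact Real.rpow_le_rpow_of_exponent_le hx (by simpa using hτ)
  refine ⟨α, tsum_nonneg fun j => by positivity, ?_, ?_, ?_⟩
  · have := htail_le 0
    have h1 : n 0 = 1 := rfl
    rw [h1] at this
    simpa [hα] using this
  · suffices H : ∀ p q : ℤ, 1 ≤ q → 1 / 16 * (q:ℝ) ^ (-τ) ≤ |q * α - p| by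
      intro p q hq
      rcases lt_or_gt_of_ne hq with h | h
      · have := H p (-q) (by omega)
        have hq' : (q:ℝ) < 0 := by exact_mod_cast h
        rw [abs_of_neg hq']
        push_cast at this
        rwa [← abs_neg (-(q:ℝ) * α - p), show -(-(q:ℝ) * α - p) = p + α * q by ring] at this
      · have := H (-p) q (by omega)
        have hq' : 0 < (q:ℝ) := by exact_mod_cast h
        rw [abs_of_pos hq']
        push_cast at this
        rwa [show (q:ℝ) * α - -p = p + α * q by ring] at this
    intro p q hq
    have hq1 : (1:ℝ) ≤ q := by exact_mod_cast hq
    have hq0 : (0:ℝ) < q := by linarith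
    have hqτ : 0 < (q:ℝ) ^ τ := Real.rpow_pos_of_pos hq0 _
    have hex : ∃ k, 4 * q * Q k ≤ Q (k + 1) := by
      refine ⟨(4 * q).toNat, ?_⟩
      refine le_trans ?_ (hQlo _)
      rw [hsplit]
      have h1 := hQk (4 * q).toNat
      have h2 : (((4 * q).toNat : ℕ) : ℝ) = 4 * q := by
        have : (((4 * q).toNat : ℕ) : ℤ) = 4 * q := Int.toNat_of_nonneg (by omega)
        exact_mod_cast this
      rw [h2] at h1
      have h3 := hsq _ (hQ1 (4 * q).toNat)
      have h4 := hQ1 (4 * q).toNat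
      have h5 := hQ0 (4 * q).toNat
      gcongr
      nlinarith
    classical
    let k := Nat.find hex
    have hk : 4 * q * Q k ≤ Q (k + 1) := Nat.find_spec hex
    have hQkq : Q k ≤ 8 * (q:ℝ) ^ τ := by
      have hq2 := hsq _ hq1
      rcases Nat.eq_zero_or_pos k with h | h
      · rw [h]
        have : Q 0 = 2 := by simp [hQ, n, expSeq]
        rw [this]
        nlinarith
      · obtain ⟨j, hj⟩ : ∃ j, k = j + 1 := ⟨k - 1, by omega⟩
        have hlt := Nat.find_min hex (m := j) (by change j < k; omega)
        push Not at hlt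
        rw [hj]
        have h1 := hQlo j
        rw [hsplit] at h1
        have h2 : Q j ^ τ < 4 * q := by
          have := hQ0 j
          by_contra hcon
          push Not at hcon
          have := mul_le_mul_of_nonneg_right hcon this.le
          linarith
        have h3 := hsq _ (hQ1 j)
        have h4 : Q j ≤ 2 * q := by
          by_contra hcon
          push Not at hcon
          nlinarith
        nlinarith
    rw [Real.rpow_neg hq0.le]
    -- Either `p / q` is the `k`-th partial sum, and then `Q k ∣ q`, or it differs from it by at
    -- least `1 / (q Q k)`, which dominates the error of the partial sum.
    by_cases heq : p * (2 ^ n k : ℤ) = numSeq τ k * q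
    · have hdvd : (2 ^ n k : ℤ) ∣ q := by
        have h1 : (2 ^ n k : ℤ) ∣ numSeq τ k * q := ⟨p, by rw [← heq]; ring⟩
        refine IsCoprime.dvd_of_dvd_mul_left ?_ h1
        refine IsCoprime.pow_left ?_
        exact Int.isCoprime_two_left.2 (odd_numSeq hτ k)
      have hle : Q k ≤ q := by
        have := Int.le_of_dvd (by omega) hdvd
        simp only [hQ]
        exact_mod_cast this
      have heq' : (p:ℝ) = q * (numSeq τ k / Q k) := by
        have : (p:ℝ) * Q k = numSeq τ k * q := by simp only [hQ]; exact_mod_cast heq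
        have := hQ0 k
        field_simp
        linarith
      have h1 : q / Q (k + 1) ≤ |q * α - p| := by
        rw [heq', ← mul_sub]
        refine le_trans ?_ (le_abs_self _)
        rw [div_eq_mul_one_div]
        exact mul_le_mul_of_nonneg_left (hlo k) hq0.le
      refine le_trans ?_ h1
      have h2 : Q (k + 1) ≤ 2 * ((q:ℝ) ^ τ * q) := by
        refine (hQhi k).trans ?_
        rw [hsplit]
        have := Real.rpow_le_rpow (hQ0 k).le hle (by linarith : 0 ≤ τ)
        have := hQ0 k
        gcongr
      rw [le_div_iff₀ (hQ0 _)]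
      calc _ ≤ 1 / 16 * ((q:ℝ) ^ τ)⁻¹ * (2 * ((q:ℝ) ^ τ * q)) := by gcongr
        _ = q / 8 := by field_simp; norm_num
        _ ≤ q := by linarith
    · have hone : 1 ≤ |(numSeq τ k * q - p * 2 ^ n k : ℝ)| := by
        have : numSeq τ k * q - p * 2 ^ n k ≠ 0 := by
          intro h; exact heq (by linarith)
        have := Int.one_le_abs this
        exact_mod_cast this
      have h1 : (q:ℝ) * α - p = (numSeq τ k * q - p * 2 ^ n k) / Q k
          + q * (α - numSeq τ k / Q k) := by
        have : (2:ℝ) ^ n k ≠ 0 := by positivity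
        simp only [hQ]
        field_simp
        ring
      have h2 : |q * (α - numSeq τ k / Q k)| ≤ 1 / (2 * Q k) := by
        have h3 : 0 ≤ α - numSeq τ k / Q k := le_trans (by have := hQ0 (k+1); positivity) (hlo k)
        rw [abs_of_nonneg (by positivity)]
        calc _ ≤ q * (2 / Q (k + 1)) := by gcongr; exact hhi k
          _ ≤ q * (2 / (4 * q * Q k)) := by
            have := hQ0 k
            gcongr
          _ = _ := by have := hQ0 k; field_simp; norm_num
      have h3 : 1 / Q k ≤ |(numSeq τ k * q - p * 2 ^ n k : ℝ) / Q k| := by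
        rw [abs_div, abs_of_pos (hQ0 k)]
        have := hQ0 k
        gcongr
      have h4 := abs_sub_abs_le_abs_add ((numSeq τ k * q - p * 2 ^ n k : ℝ) / Q k)
        (q * (α - numSeq τ k / Q k))
      rw [← h1] at h4
      have h5 : 1 / Q k = 1 / (2 * Q k) + 1 / (2 * Q k) := by
        have := hQ0 k
        field_simp; norm_num
      have h6 : 1 / 16 * ((q:ℝ) ^ τ)⁻¹ ≤ 1 / (2 * Q k) := by
        have := hQ0 k
        rw [le_div_iff₀ (by positivity)]
        calc _ ≤ 1 / 16 * ((q:ℝ) ^ τ)⁻¹ * (2 * (8 * (q:ℝ) ^ τ)) := by gcongr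
          _ = 1 := by field_simp; norm_num
      linarith
  · intro N
    refine ⟨-numSeq τ N, 2 ^ n N, ?_, ?_, ?_⟩
    · have h1 : N < 2 ^ N := Nat.lt_two_pow_self
      have h2 : 2 ^ N ≤ 2 ^ n N := Nat.pow_le_pow_right (by norm_num) (hn_ge N)
      exact_mod_cast h1.le.trans h2
    · exact one_le_pow₀ (by norm_num)
    · have hq : (((2 ^ n N : ℤ)) : ℝ) = Q N := by simp [hQ]
      rw [hq]
      have h0 := hQ0 N
      have e : ((-numSeq τ N : ℤ) : ℝ) + α * Q N = Q N * (α - numSeq τ N / Q N) := by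
        push_cast; field_simp; ring
      have h3 : 0 ≤ α - numSeq τ N / Q N := le_trans (by have := hQ0 (N+1); positivity) (hlo N)
      rw [e, abs_of_nonneg (by positivity)]
      calc _ ≤ Q N * (2 / Q (N + 1)) := by gcongr; exact hhi N
        _ ≤ Q N * (2 / (Q N ^ τ * Q N)) := by
          gcongr
          rw [← hsplit]; exact hQlo N
        _ = _ := by rw [Real.rpow_neg h0.le]; field_simp

/-! ### The rank two sublattice -/

/-- The numbers `√2 + m` are badly approximable, since the norm form `p² - 2 q²` takes no value in
`(-1, 1)` for `q ≠ 0`. -/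
lemma sqrt_two_add_bad (m : ℕ) {τ : ℝ} (hτ : 1 ≤ τ) (p q : ℤ) (hq : q ≠ 0) :
    1 / 4 * |(q:ℝ)| ^ (-τ) ≤ |p + (√2 + m) * q| := by
  have hq1 : (1:ℝ) ≤ |(q:ℝ)| := by exact_mod_cast Int.one_le_abs hq
  have hq0 : 0 < |(q:ℝ)| := by linarith
  have h1 : |(q:ℝ)| ^ (-τ) ≤ |(q:ℝ)|⁻¹ := by
    rw [← Real.rpow_neg_one]
    exact Real.rpow_le_rpow_of_exponent_le hq1 (by linarith)
  have hs0 : 0 ≤ √2 := Real.sqrt_nonneg 2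
  have hs2 : √2 ^ 2 = 2 := Real.sq_sqrt (by norm_num)
  have hs : √2 ≤ 3 / 2 := by nlinarith
  set p' : ℤ := p + m * q with hp'
  have e : (p + (√2 + m) * q : ℝ) = p' + √2 * q := by rw [hp']; push_cast; ring
  rw [e]
  have hone : (1:ℝ) ≤ |(p' + √2 * q) * (p' - √2 * q)| := by
    have e2 : ((p' + √2 * q) * (p' - √2 * q) : ℝ) = ((p' ^ 2 - 2 * q ^ 2 : ℤ) : ℝ) := by
      push_cast
      linear_combination (-(q:ℝ) ^ 2) * hs2
    rw [e2]
    have hne : p' ^ 2 - 2 * q ^ 2 ≠ 0 := by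
      intro h
      have h3 : (p':ℝ) ^ 2 = 2 * q ^ 2 := by
        have : p' ^ 2 = 2 * q ^ 2 := by linarith
        exact_mod_cast this
      have hqne : (q:ℝ) ≠ 0 := by exact_mod_cast hq
      have h4 : √2 = |(p':ℝ) / q| := by
        rw [Real.sqrt_eq_iff_mul_self_eq (by norm_num) (abs_nonneg _), abs_mul_abs_self]
        field_simp
        linarith
      refine irrational_sqrt_two ⟨|(p':ℚ) / q|, ?_⟩
      rw [h4]; push_cast; rfl
    exact_mod_cast Int.one_le_abs hne
  rw [abs_mul] at hone
  have hv : |(p' - √2 * q : ℝ)| ≤ |(p' + √2 * q : ℝ)| + 3 * |(q:ℝ)| := by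
    have : (p' - √2 * q : ℝ) = (p' + √2 * q) - 2 * √2 * q := by ring
    rw [this]
    refine (abs_sub _ _).trans ?_
    rw [abs_mul, abs_of_nonneg (by positivity : 0 ≤ 2 * √2)]
    nlinarith
  set u := |(p' + √2 * q : ℝ)|
  have hu0 : 0 ≤ u := abs_nonneg _
  have hmain : 1 / 4 ≤ u * |(q:ℝ)| := by
    by_contra hcon
    push Not at hcon
    have hu : u < 1 / 4 := by nlinarith
    nlinarith
  calc _ ≤ 1 / 4 * |(q:ℝ)|⁻¹ := by gcongr
    _ ≤ u := by rw [← div_eq_mul_inv, div_le_iff₀ hq0]; exact hmain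

/-- Two coordinates of a point differ by at least `|q|`, so the larger is at least `|q| / 2`. -/
lemma le_two_mul_of_abs_le {k : ℕ} {α : Fin (k+2) → ℝ} (hsep : ∀ i j, i ≠ j → 1 ≤ |α i - α j|)
    (z : ℤ × ℤ) {i j : Fin (k+2)} (hij : i ≠ j) (h : |planePt α z i| ≤ |planePt α z j|) :
    |(z.2:ℝ)| ≤ 2 * |planePt α z j| := by
  have e : planePt α z i - planePt α z j = (α i - α j) * z.2 := by simp only [planePt]; ring
  have h1 := abs_sub (planePt α z i) (planePt α z j)
  rw [e, abs_mul] at h1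
  nlinarith [hsep i j hij, abs_nonneg (z.2:ℝ)]

/-- If every slope has approximation exponent at most `τ`, the points of the rank two lattice satisfy
`∏ |x i| ≥ e^(-K) ‖x‖^(k+1-τ)`: at most one coordinate is much smaller than `‖x‖`, and that one is
at least a constant times `‖x‖^(-τ)`. -/
lemma plane_lower {k : ℕ} {α : Fin (k+2) → ℝ} {A c τ : ℝ}
    (hsep : ∀ i j, i ≠ j → 1 ≤ |α i - α j|) (hA : 0 ≤ A) (hα : ∀ i, |α i| ≤ A)
    (hc : 0 < c) (hc1 : c ≤ 1) (hτ : 0 ≤ τ)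
    (hbad : ∀ i, ∀ p q : ℤ, q ≠ 0 → c * |(q:ℝ)| ^ (-τ) ≤ |p + α i * q|) :
    ∃ K, ∀ z : ℤ × ℤ, z ≠ 0 → 1 ≤ ‖planePt α z‖ → 0 < ∏ i, |planePt α z i| ∧
      -K - (τ - (k + 1)) * Real.log ‖planePt α z‖ ≤ Real.log (∏ i, |planePt α z i|) := by
  refine ⟨-Real.log c + τ * Real.log 2 + (k + 1) * Real.log (1 + 4 * A), fun z hz hX => ?_⟩
  set x := planePt α z with hx
  obtain ⟨i₀, -, hi₀⟩ := Finset.exists_min_image Finset.univ (fun i => |x i|)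
    Finset.univ_nonempty
  have hmin : ∀ j, |x i₀| ≤ |x j| := fun j => hi₀ j (Finset.mem_univ j)
  have hnorm : ∀ j, |x j| ≤ ‖x‖ := fun j => norm_le_pi_norm x j
  have hq : ∀ j, j ≠ i₀ → |(z.2:ℝ)| ≤ 2 * |x j| := fun j hj =>
    le_two_mul_of_abs_le hsep z hj.symm (hmin j)
  have hX0 : 0 < ‖x‖ := by linarith
  have hA1 : 0 < 1 + 4 * A := by linarith
  have hbig : ∀ j, j ≠ i₀ → ‖x‖ / (1 + 4 * A) ≤ |x j| := by
    intro j hj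
    rw [div_le_iff₀ hA1, pi_norm_le_iff_of_nonneg (by positivity)]
    intro i
    have h1 := hq j hj
    have hp : |(z.1:ℝ)| ≤ |x j| + A * |(z.2:ℝ)| := by
      have : (z.1:ℝ) = x j - α j * z.2 := by simp [hx, planePt]
      rw [this]
      refine (abs_sub _ _).trans ?_
      rw [abs_mul]
      gcongr
      exact hα j
    have hi : |x i| ≤ |(z.1:ℝ)| + A * |(z.2:ℝ)| := by
      refine (abs_add_le _ _).trans ?_
      rw [abs_mul]
      gcongr
      exact hα i
    rw [Real.norm_eq_abs]
    nlinarith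
  have hsmall : c * (2 * ‖x‖) ^ (-τ) ≤ |x i₀| := by
    have h2X : 1 ≤ 2 * ‖x‖ := by linarith
    by_cases h : z.2 = 0
    · have hz1 : z.1 ≠ 0 := fun h1 => hz (Prod.ext h1 h)
      have h1 : (1:ℝ) ≤ |x i₀| := by
        have : x i₀ = z.1 := by simp [hx, planePt, h]
        rw [this]
        exact_mod_cast Int.one_le_abs hz1
      have h2 : (2 * ‖x‖) ^ (-τ) ≤ 1 :=
        Real.rpow_le_one_of_one_le_of_nonpos h2X (by linarith)
      have h3 : 0 ≤ (2 * ‖x‖) ^ (-τ) := by positivity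
      nlinarith
    · refine le_trans ?_ (hbad i₀ z.1 z.2 h)
      obtain ⟨j, hj⟩ := exists_ne i₀
      have h1 : |(z.2:ℝ)| ≤ 2 * ‖x‖ := (hq j hj).trans (by linarith [hnorm j])
      have h2 : 0 < |(z.2:ℝ)| := by positivity
      have := Real.rpow_le_rpow_of_nonpos h2 h1 (by linarith : -τ ≤ 0)
      gcongr
  have hs0 : 0 < c * (2 * ‖x‖) ^ (-τ) := by positivity
  have hprod : c * (2 * ‖x‖) ^ (-τ) * (‖x‖ / (1 + 4 * A)) ^ (k + 1) ≤ ∏ i, |x i| := by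
    rw [← Finset.mul_prod_erase _ _ (Finset.mem_univ i₀)]
    refine mul_le_mul hsmall ?_ (by positivity) (abs_nonneg _)
    have := Finset.prod_le_prod (s := Finset.univ.erase i₀)
      (f := fun _ => ‖x‖ / (1 + 4 * A)) (g := fun i => |x i|) (fun _ _ => by positivity)
      (fun j hj => hbig j (Finset.ne_of_mem_erase hj))
    rw [Finset.prod_const, Finset.card_erase_of_mem (Finset.mem_univ _), Finset.card_univ,
      Fintype.card_fin] at this
    exact this
  have hpos : 0 < c * (2 * ‖x‖) ^ (-τ) * (‖x‖ / (1 + 4 * A)) ^ (k + 1) := by positivity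
  refine ⟨hpos.trans_le hprod, le_trans (le_of_eq ?_) (Real.log_le_log hpos hprod)⟩
  rw [Real.log_mul hs0.ne' (by positivity), Real.log_mul hc.ne' (by positivity),
    Real.log_rpow (by positivity), Real.log_mul (by norm_num) hX0.ne', Real.log_pow,
    Real.log_div hX0.ne' hA1.ne']
  push_cast
  ring

/-- If the first slope is approximable to order `τ`, there are arbitrarily long points of the rank two
lattice with `∏ |x i| ≤ e^K ‖x‖^(k+1-τ)`. -/
lemma plane_upper {k : ℕ} {α : Fin (k+2) → ℝ} {A τ : ℝ}
    (hsep : ∀ i j, i ≠ j → 1 ≤ |α i - α j|) (hA : 0 ≤ A) (hα : ∀ i, |α i| ≤ A) (hτ : 0 ≤ τ)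
    (happ : ∀ N : ℕ, ∃ p q : ℤ, (N:ℤ) ≤ q ∧ 1 ≤ q ∧ |p + α 0 * q| ≤ 2 * (q:ℝ) ^ (-τ)) :
    ∃ K, ∀ R : ℝ, ∃ z : ℤ × ℤ, z ≠ 0 ∧ R ≤ ‖planePt α z‖ ∧ 1 ≤ ‖planePt α z‖ ∧
      (0 < ∏ i, |planePt α z i| → Real.log (∏ i, |planePt α z i|) ≤
        K - (τ - (k + 1)) * Real.log ‖planePt α z‖) := by
  refine ⟨Real.log 2 + τ * Real.log (1 + 2 * A), fun R => ?_⟩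
  obtain ⟨p, q, hN, hq1, hpq⟩ := happ (⌈2 * R⌉₊ + 2)
  have hq2 : (2:ℝ) ≤ q := by
    have : 2 ≤ q := by push_cast at hN; omega
    exact_mod_cast this
  have hqR : 2 * R ≤ q := by
    have h1 := Nat.le_ceil (2 * R)
    have h2 : ((⌈2 * R⌉₊ : ℕ) : ℤ) ≤ q := by push_cast at hN ⊢; omega
    have h3 : ((⌈2 * R⌉₊ : ℕ) : ℝ) ≤ q := by exact_mod_cast h2
    linarith
  have hq0 : (0:ℝ) < q := by linarith
  refine ⟨(p, q), ?_, ?_⟩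
  · intro h
    have : q = 0 := congrArg Prod.snd h
    omega
  set x := planePt α (p, q) with hx
  have hnorm : ∀ j, |x j| ≤ ‖x‖ := fun j => norm_le_pi_norm x j
  have hXq : (q:ℝ) ≤ 2 * ‖x‖ := by
    have hqa : |(((p, q) : ℤ × ℤ).2 : ℝ)| = q := abs_of_pos hq0
    rcases le_total |x 0| |x 1| with h | h
    · have := le_two_mul_of_abs_le hsep (p, q) (by simp) h
      rw [hqa] at this
      linarith [hnorm 1]
    · have := le_two_mul_of_abs_le hsep (p, q) (by simp) h
      rw [hqa] at this
      linarith [hnorm 0]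
  refine ⟨by linarith, by linarith, fun hP => ?_⟩
  have hX0 : 0 < ‖x‖ := by linarith
  have hA1 : 0 < 1 + 2 * A := by linarith
  have hx0 : |x 0| ≤ 2 * (q:ℝ) ^ (-τ) := hpq
  have hqτ : (q:ℝ) ^ (-τ) ≤ 1 :=
    Real.rpow_le_one_of_one_le_of_nonpos (by linarith) (by linarith)
  have hXup : ‖x‖ ≤ (1 + 2 * A) * q := by
    rw [pi_norm_le_iff_of_nonneg (by positivity)]
    intro i
    have e : x i = x 0 + (α i - α 0) * q := by simp only [hx, planePt]; ring
    rw [Real.norm_eq_abs, e]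
    refine (abs_add_le _ _).trans ?_
    rw [abs_mul, abs_of_pos hq0]
    have := abs_sub (α i) (α 0)
    nlinarith [hα i, hα 0]
  have hqlow : ‖x‖ / (1 + 2 * A) ≤ q := by rw [div_le_iff₀ hA1]; linarith
  have hprod : ∏ i, |x i| ≤ 2 * (‖x‖ / (1 + 2 * A)) ^ (-τ) * ‖x‖ ^ (k + 1) := by
    rw [Fin.prod_univ_succ]
    refine mul_le_mul (hx0.trans ?_) ?_ (Finset.prod_nonneg fun i _ => abs_nonneg _) (by positivity)
    · have := Real.rpow_le_rpow_of_nonpos (by positivity) hqlow (by linarith : -τ ≤ 0)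
      gcongr
    · have := Finset.prod_le_prod (s := Finset.univ) (f := fun i : Fin (k+1) => |x i.succ|)
        (g := fun _ => ‖x‖) (fun _ _ => abs_nonneg _) (fun j _ => hnorm _)
      simpa using this
  refine (Real.log_le_log hP hprod).trans (le_of_eq ?_)
  rw [Real.log_mul (by positivity) (by positivity), Real.log_mul (by norm_num) (by positivity),
    Real.log_rpow (by positivity), Real.log_pow, Real.log_div hX0.ne' hA1.ne']
  push_cast
  ring

/-! ### The full lattice -/

lemma linearIndependent_cons_single {k : ℕ} (α : Fin (k+2) → ℝ) (ha : α 0 ≠ α 1) :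
    LinearIndependent ℝ (Fin.cons 1 (Fin.cons α fun j : Fin k => Pi.single j.succ.succ 1) :
      Fin (k+2) → Fin (k+2) → ℝ) := by
  rw [Fintype.linearIndependent_iff]
  intro g hg
  rw [Fin.sum_univ_succ, Fin.sum_univ_succ] at hg
  simp only [Fin.cons_zero, Fin.cons_succ] at hg
  have hcoord := fun i => congrFun hg i
  simp only [Pi.add_apply, Pi.smul_apply, Pi.one_apply, Finset.sum_apply, smul_eq_mul,
    Pi.zero_apply, mul_one] at hcoord
  have e0 := hcoord 0
  have e1 := hcoord 1
  rw [Finset.sum_eq_zero fun j _ => by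
    rw [Pi.single_eq_of_ne (Fin.succ_ne_zero _).symm, mul_zero]] at e0
  rw [Finset.sum_eq_zero fun j _ => by
    rw [Pi.single_eq_of_ne (by simp [Fin.ext_iff]), mul_zero]] at e1
  have h1 : g (Fin.succ 0) = 0 := by
    have : g (Fin.succ 0) * (α 0 - α 1) = 0 := by linarith
    exact (mul_eq_zero.1 this).resolve_right (sub_ne_zero.2 ha)
  have h0 : g 0 = 0 := by rw [h1] at e0; linarith
  intro i
  refine Fin.cases h0 (fun i => Fin.cases h1 (fun j => ?_) i) i
  have ej := hcoord j.succ.succ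
  rw [h0, h1, Finset.sum_eq_single j] at ej
  · simpa using ej
  · intro i _ hij
    rw [Pi.single_eq_of_ne (by simpa using hij.symm), mul_zero]
  · simp

/-- Linear independence is an open condition satisfied by the standard vectors, so the conull set of
`ae_finite_sum` contains a tuple completing `(1, …, 1), α` to a basis. The exponents `η = 1 / (n+2)`
are treated simultaneously. -/
lemma exists_directions {k : ℕ} (α : Fin (k+2) → ℝ) (ha : 1 ≤ |α 0 - α 1|) :
    ∃ b : Fin k → Fin (k+2) → ℝ,
      LinearIndependent ℝ (Fin.cons 1 (Fin.cons α b) : Fin (k+2) → Fin (k+2) → ℝ) ∧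
      ∀ n : ℕ, ∑' t : {t : Fin k → ℤ // t ≠ 0}, ∑' z,
        ENNReal.ofReal (‖t.1‖ ^ (-(1 / ((n:ℝ) + 2)))) *
          weight (k+2) (1 / ((n:ℝ) + 2)) (planePt α z + ∑ j, (t.1 j : ℝ) • b j) < ⊤ := by
  set c : Fin k → Fin (k+2) → ℝ := fun j => Pi.single j.succ.succ 1
  have hae : ∀ᵐ b ∂boxMeasure k c, ∀ n : ℕ, ∑' t : {t : Fin k → ℤ // t ≠ 0}, ∑' z,
        ENNReal.ofReal (‖t.1‖ ^ (-(1 / ((n:ℝ) + 2)))) *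
          weight (k+2) (1 / ((n:ℝ) + 2)) (planePt α z + ∑ j, (t.1 j : ℝ) • b j) < ⊤ := by
    rw [ae_all_iff]
    intro n
    refine ae_finite_sum (by positivity) ?_ α ha c
    rw [div_lt_one (by positivity)]
    have : (0:ℝ) ≤ n := Nat.cast_nonneg n
    linarith
  have hα : α 0 ≠ α 1 := by
    intro h
    rw [h, sub_self, abs_zero] at ha
    linarith
  let V : Set (Fin k → Fin (k+2) → ℝ) :=
    (fun b => (Fin.cons 1 (Fin.cons α b) : Fin (k+2) → Fin (k+2) → ℝ)) ⁻¹'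
      {v | LinearIndependent ℝ v} ∩ Metric.ball c 1
  have hV : IsOpen V := by
    refine IsOpen.inter (IsOpen.preimage ?_ isOpen_setOfPred_linearIndependent) Metric.isOpen_ball
    refine continuous_pi fun i => ?_
    refine Fin.cases ?_ (fun i => Fin.cases ?_ (fun j => ?_) i) i
    · exact continuous_const
    · exact continuous_const
    · exact continuous_apply j
  have hVne : V.Nonempty :=
    ⟨c, linearIndependent_cons_single α hα, Metric.mem_ball_self one_pos⟩
  rw [boxMeasure, ← Measure.restrict_pi_pi, ← closedBall_pi _ zero_le_one,
    ae_restrict_iff' Metric.isClosed_closedBall.measurableSet] at hae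
  by_contra hcon
  push Not at hcon
  have hsub : V ⊆ {b | ¬ (b ∈ Metric.closedBall c 1 → ∀ n : ℕ,
      ∑' t : {t : Fin k → ℤ // t ≠ 0}, ∑' z,
        ENNReal.ofReal (‖t.1‖ ^ (-(1 / ((n:ℝ) + 2)))) *
          weight (k+2) (1 / ((n:ℝ) + 2)) (planePt α z + ∑ j, (t.1 j : ℝ) • b j) < ⊤)} := by
    rintro b ⟨hb1, hb2⟩ hall
    obtain ⟨n, hn⟩ := hcon b hb1
    exact absurd (hall (Metric.ball_subset_closedBall hb2) n) (not_lt.2 hn)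
  exact (hV.measure_pos _ hVne).ne' (measure_mono_null hsub hae)

/-- The lattice point with integer coordinates `w = (z, t)` in the basis
`(1, …, 1), α, b 0, …, b (k-1)`. -/
def latticePt {k : ℕ} (α : Fin (k+2) → ℝ) (b : Fin k → Fin (k+2) → ℝ)
    (w : (ℤ × ℤ) × (Fin k → ℤ)) : Fin (k+2) → ℝ :=
  planePt α w.1 + ∑ j, (w.2 j : ℝ) • b j

lemma sum_smul_cons {k : ℕ} (α : Fin (k+2) → ℝ) (b : Fin k → Fin (k+2) → ℝ)
    (g : Fin (k+2) → ℤ) :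
    ∑ i, (g i : ℝ) • (Fin.cons 1 (Fin.cons α b) : Fin (k+2) → Fin (k+2) → ℝ) i =
      latticePt α b ((g 0, g 1), fun j => g j.succ.succ) := by
  rw [Fin.sum_univ_succ, Fin.sum_univ_succ, ← add_assoc]
  simp only [Fin.cons_zero, Fin.cons_succ, latticePt]
  congr 1
  ext i
  simp [planePt, mul_comm]

lemma isFullLattice_range {k : ℕ} {α : Fin (k+2) → ℝ} {b : Fin k → Fin (k+2) → ℝ}
    (hb : LinearIndependent ℝ (Fin.cons 1 (Fin.cons α b) : Fin (k+2) → Fin (k+2) → ℝ)) :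
    IsFullLattice (range (latticePt α b)) := by
  refine ⟨_, hb, ?_⟩
  ext x
  constructor
  · rintro ⟨w, rfl⟩
    refine ⟨Fin.cons w.1.1 (Fin.cons w.1.2 w.2), ?_⟩
    rw [sum_smul_cons]
    rfl
  · rintro ⟨g, rfl⟩
    exact ⟨_, (sum_smul_cons α b g).symm⟩

/-- Integer coordinates are bounded by a constant times the norm of the point. -/
lemma exists_norm_le {k : ℕ} {α : Fin (k+2) → ℝ} {b : Fin k → Fin (k+2) → ℝ}
    (hb : LinearIndependent ℝ (Fin.cons 1 (Fin.cons α b) : Fin (k+2) → Fin (k+2) → ℝ)) :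
    ∃ C : ℝ, 1 ≤ C ∧ ∀ w, ‖w‖ ≤ C * ‖latticePt α b w‖ := by
  obtain ⟨C, hC, hanti⟩ := LinearMap.exists_antilipschitzWith
    (Fintype.linearCombination ℝ (Fin.cons 1 (Fin.cons α b) : Fin (k+2) → Fin (k+2) → ℝ))
    (LinearMap.ker_eq_bot.2 hb.fintypeLinearCombination_injective)
  refine ⟨max 1 C, le_max_left _ _, fun w => ?_⟩
  set g : Fin (k+2) → ℤ := Fin.cons w.1.1 (Fin.cons w.1.2 w.2) with hg
  have h1 := hanti.le_mul_norm (map_zero _) (fun i => (g i : ℝ))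
  rw [Fintype.linearCombination_apply, sum_smul_cons] at h1
  have h2 : ((g 0, g 1), fun j => g j.succ.succ) = w := rfl
  rw [h2] at h1
  have h3 : ∀ i, ‖g i‖ ≤ max 1 (C:ℝ) * ‖latticePt α b w‖ := by
    intro i
    have h4 := norm_le_pi_norm (fun i => (g i : ℝ)) i
    rw [Int.norm_eq_abs, ← Real.norm_eq_abs]
    refine (h4.trans h1).trans ?_
    gcongr
    exact le_max_right _ _
  refine norm_prod_le_iff.2 ⟨norm_prod_le_iff.2 ⟨h3 0, h3 1⟩, ?_⟩
  rw [pi_norm_le_iff_of_nonneg ((norm_nonneg _).trans (h3 0))]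
  exact fun j => h3 j.succ.succ

lemma finite_latticePt_norm_le {k : ℕ} {α : Fin (k+2) → ℝ} {b : Fin k → Fin (k+2) → ℝ}
    (hb : LinearIndependent ℝ (Fin.cons 1 (Fin.cons α b) : Fin (k+2) → Fin (k+2) → ℝ)) (R : ℝ) :
    {x | x ∈ range (latticePt α b) ∧ ‖x‖ ≤ R}.Finite := by
  obtain ⟨C, hC, h⟩ := exists_norm_le hb
  refine ((isCompact_closedBall (0 : (ℤ × ℤ) × (Fin k → ℤ)) (C * R)).finite_of_discrete.image
    (latticePt α b)).subset ?_
  rintro _ ⟨⟨w, rfl⟩, hw⟩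
  refine ⟨w, ?_, rfl⟩
  rw [mem_closedBall_zero_iff]
  exact (h w).trans (by gcongr)

/-- Outside the rank two sublattice, `∏ |x i| ≥ e^(-K) ‖x‖^(-δ)` with finitely many exceptions: the
terms of a convergent series are eventually less than `1`. -/
lemma finite_bad_tail {k : ℕ} {α : Fin (k+2) → ℝ} {b : Fin k → Fin (k+2) → ℝ}
    (hb : LinearIndependent ℝ (Fin.cons 1 (Fin.cons α b) : Fin (k+2) → Fin (k+2) → ℝ))
    (hsum : ∀ n : ℕ, ∑' t : {t : Fin k → ℤ // t ≠ 0}, ∑' z,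
        ENNReal.ofReal (‖t.1‖ ^ (-(1 / ((n:ℝ) + 2)))) *
          weight (k+2) (1 / ((n:ℝ) + 2)) (planePt α z + ∑ j, (t.1 j : ℝ) • b j) < ⊤)
    {δ : ℝ} (hδ : 0 < δ) :
    ∃ K, {w : (ℤ × ℤ) × (Fin k → ℤ) | w.2 ≠ 0 ∧ ¬(1 ≤ ‖latticePt α b w‖ →
      0 < ∏ i, |latticePt α b w i| ∧ -K - δ * Real.log ‖latticePt α b w‖ ≤
        Real.log (∏ i, |latticePt α b w i|))}.Finite := by
  obtain ⟨C, hC, hCw⟩ := exists_norm_le hb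
  -- `n` is so large that the exponent in `log_prod_ge_of_weight` is at most `δ`.
  obtain ⟨n, hn⟩ := exists_nat_gt (2 * (2 * ((k + 2 : ℕ) : ℝ) + 1) / δ)
  set η : ℝ := 1 / ((n:ℝ) + 2) with hη
  have hn0 : (0:ℝ) ≤ n := Nat.cast_nonneg n
  have hη0 : 0 < η := by positivity
  have hη1 : η ≤ 1 / 2 := by
    rw [hη]
    gcongr
    linarith
  have hηδ : 2 * (2 * ((k + 2 : ℕ) : ℝ) + 1) * η ≤ δ := by
    rw [div_lt_iff₀ hδ] at hn
    rw [hη, mul_one_div, div_le_iff₀ (by positivity)]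
    nlinarith
  refine ⟨Real.log C + 2 * ((k + 2 : ℕ) : ℝ) * Real.log 2, ?_⟩
  have hfin := hsum n
  rw [← ENNReal.tsum_prod] at hfin
  have htend := ENNReal.tendsto_cofinite_zero_of_tsum_ne_top hfin.ne
  have hev := htend.eventually_lt_const zero_lt_one
  rw [Filter.eventually_cofinite] at hev
  refine (hev.image fun s => ((s.2, s.1.1) : (ℤ × ℤ) × (Fin k → ℤ))).subset ?_
  rintro ⟨z, t⟩ ⟨ht, hbad⟩
  refine ⟨(⟨t, ht⟩, z), fun hlt => hbad fun hX => ?_, rfl⟩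
  have ht0 : 0 < ‖t‖ := norm_pos_iff.2 ht
  have htC : ‖t‖ ≤ C * ‖latticePt α b (z, t)‖ := (norm_snd_le ((z, t) : (ℤ × ℤ) × (Fin k → ℤ))).trans (hCw _)
  obtain ⟨h1, h2⟩ := log_prod_ge_of_weight hη0 hη1 hC (latticePt α b (z, t)) hX ht0 htC hlt
  refine ⟨h1, le_trans ?_ h2⟩
  have := mul_le_mul_of_nonneg_right hηδ (Real.log_nonneg hX)
  linarith

/-! ### Prescribing the exponent -/

/-- The slopes `a, √2 + 1, √2 + 2, …, √2 + (k+1)`: the first one carries the exponent, the others are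
badly approximable. -/
def slopes (k : ℕ) (a : ℝ) : Fin (k+2) → ℝ :=
  Fin.cons a fun i : Fin (k+1) => √2 + ((i.1 + 1 : ℕ) : ℝ)

lemma one_le_sqrt_two : 1 ≤ √2 := Real.one_le_sqrt.2 (by norm_num)

lemma one_le_abs_slopes_sub {k : ℕ} {a : ℝ} (h1 : a ≤ 1) (i j : Fin (k+2)) (hij : i ≠ j) :
    1 ≤ |slopes k a i - slopes k a j| := by
  have key : ∀ i : Fin (k+1), 1 ≤ |slopes k a i.succ - slopes k a 0| := by
    intro i
    refine le_trans ?_ (le_abs_self _)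
    simp only [slopes, Fin.cons_succ, Fin.cons_zero]
    push_cast
    have : (0:ℝ) ≤ (i.1:ℝ) := Nat.cast_nonneg _
    linarith [one_le_sqrt_two]
  induction i using Fin.cases with
  | zero =>
    induction j using Fin.cases with
    | zero => exact absurd rfl hij
    | succ j => rw [abs_sub_comm]; exact key j
  | succ i =>
    induction j using Fin.cases with
    | zero => exact key i
    | succ j =>
      have hne : (i.1 : ℤ) - j.1 ≠ 0 := by
        intro h
        exact hij (congrArg Fin.succ (Fin.ext (by omega)))
      have e : slopes k a i.succ - slopes k a j.succ = (((i.1 : ℤ) - j.1 : ℤ) : ℝ) := by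
        simp only [slopes, Fin.cons_succ]
        push_cast
        ring
      rw [e]
      exact_mod_cast Int.one_le_abs hne

lemma abs_slopes_le {k : ℕ} {a : ℝ} (h0 : 0 ≤ a) (h1 : a ≤ 1) (i : Fin (k+2)) :
    |slopes k a i| ≤ k + 3 := by
  have hk : (0:ℝ) ≤ k := Nat.cast_nonneg k
  induction i using Fin.cases with
  | zero =>
    rw [slopes, Fin.cons_zero, abs_of_nonneg h0]
    linarith
  | succ i =>
    rw [slopes, Fin.cons_succ, abs_of_nonneg (by positivity)]
    have hi : ((i.1 + 1 : ℕ) : ℝ) ≤ (k + 1 : ℕ) := Nat.cast_le.2 i.2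
    push_cast at hi ⊢
    have : √2 ≤ 2 := Real.sqrt_le_iff.2 ⟨by norm_num, by norm_num⟩
    linarith

lemma exists_latticeExponent_eq_ofReal {k : ℕ} (hk : 1 ≤ k) {γ : ℝ} (hγ : 0 ≤ γ) :
    ∃ Λ : Set (Fin (k+2) → ℝ), IsFullLattice Λ ∧
      latticeExponent (k+2) Λ = ENNReal.ofReal γ := by
  have hk1 : (1:ℝ) ≤ k := by exact_mod_cast hk
  -- With `d = k + 2`, the plane points have `∏ |x i| ≈ ‖x‖^(k+1-τ) = ‖x‖^(-dγ)` at best.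
  set τ : ℝ := ((k + 2 : ℕ) : ℝ) * γ + (k + 1) with hτ
  have hdγ : 0 ≤ ((k + 2 : ℕ) : ℝ) * γ := by positivity
  have hτ2 : 2 ≤ τ := by linarith
  have hτe : τ - (k + 1) = ((k + 2 : ℕ) : ℝ) * γ := by rw [hτ]; ring
  obtain ⟨a, ha0, ha1, habad, happ⟩ := exists_slope τ hτ2
  set α := slopes k a with hα
  have hsep := one_le_abs_slopes_sub (k := k) ha1
  have hA := abs_slopes_le (k := k) ha0 ha1
  have hbad : ∀ i, ∀ p q : ℤ, q ≠ 0 → 1 / 16 * |(q:ℝ)| ^ (-τ) ≤ |p + α i * q| := by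
    intro i p q hq
    induction i using Fin.cases with
    | zero => exact habad p q hq
    | succ i =>
      refine le_trans ?_ (sqrt_two_add_bad (i.1 + 1) (by linarith : 1 ≤ τ) p q hq)
      gcongr
      norm_num
  obtain ⟨K₁, hK₁⟩ := plane_lower hsep (by positivity) hA (by norm_num) (by norm_num)
    (by linarith : 0 ≤ τ) hbad
  obtain ⟨K₂, hK₂⟩ := plane_upper hsep (by positivity) hA (by linarith : 0 ≤ τ) happ
  obtain ⟨b, hb, hsum⟩ := exists_directions α (hsep 0 1 (by simp))
  rw [hτe] at hK₁ hK₂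
  have hdisc := finite_latticePt_norm_le hb
  have hplane : ∀ z, latticePt α b (z, 0) = planePt α z := by
    intro z
    simp [latticePt]
  refine ⟨range (latticePt α b), isFullLattice_range hb, le_antisymm ?_ ?_⟩
  · refine latticeExponent_le (by omega) hdisc fun δ hδ => ?_
    obtain ⟨K₃, hK₃⟩ := finite_bad_tail hb hsum hδ
    refine ⟨max K₁ K₃, (hK₃.image (latticePt α b)).subset ?_⟩
    rintro _ ⟨⟨⟨z, t⟩, rfl⟩, hx⟩
    refine ⟨(z, t), ⟨?_, ?_⟩, rfl⟩
    · rintro rfl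
      refine hx fun hX => ?_
      rw [hplane] at hX ⊢
      have hz : z ≠ 0 := by
        rintro rfl
        have : planePt α 0 = 0 := by ext i; simp [planePt]
        rw [this, norm_zero] at hX
        linarith
      obtain ⟨h1, h2⟩ := hK₁ z hz hX
      refine ⟨h1, le_trans ?_ h2⟩
      have := mul_nonneg hδ.le (Real.log_nonneg hX)
      linarith [le_max_left K₁ K₃]
    · intro hgood
      refine hx fun hX => ?_
      obtain ⟨h1, h2⟩ := hgood hX
      refine ⟨h1, le_trans ?_ h2⟩
      have := mul_nonneg hdγ (Real.log_nonneg hX)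
      linarith [le_max_right K₁ K₃]
  · refine le_latticeExponent (by omega) hdisc K₂ fun hfin => ?_
    obtain ⟨R, hR⟩ := (hfin.image norm).bddAbove
    obtain ⟨z, hz, hzR, hz1, hz2⟩ := hK₂ (R + 1)
    have hP := (hK₁ z hz hz1).1
    have := hR ⟨planePt α z, ⟨⟨(z, 0), hplane z⟩, hz1, hP, hz2 hP⟩, rfl⟩
    linarith

/-- For every `d ≥ 3` and every `γ ∈ [0, +∞]` there is a full-rank lattice
`Λ ⊂ ℝ^d` with `ω(Λ) = γ`; i.e. `S_d = [0, +∞]`. -/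
theorem spectrum_eq_Icc_zero_top (d : ℕ) (hd : 3 ≤ d) (γ : ENNReal) :
    ∃ Λ : Set (Fin d → ℝ), IsFullLattice Λ ∧ latticeExponent d Λ = γ := by
  rcases eq_or_ne γ ⊤ with rfl | hγ
  · exact exists_latticeExponent_eq_top d (by omega)
  · obtain ⟨k, rfl⟩ : ∃ k, d = k + 2 := ⟨d - 2, by omega⟩
    rw [← ENNReal.ofReal_toReal hγ]
    exact exists_latticeExponent_eq_ofReal (by omega) ENNReal.toReal_nonneg
end
end

section
/- For every γ ∈ [0, +∞] there exists a full-rank lattice Λ ⊂ ℝ² with ω(Λ) = γ; that is, S_2 = [0, +∞]. -/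
/-!
For `γ = ∞` any lattice with infinitely many points on a coordinate axis works, for example
`{(m - k, m + k)}`.

For finite `γ` put `μ = 1 + 2γ` and consider the lattice of all points `(m - kα, m + kα)` with
`m, k ∈ ℤ`, where `α > 0` is a real number whose rational approximations have quality exactly `μ`:
`|m - kα| ≫ |k|^(-μ)` for all `k ≠ 0`, with `|m - kα| ≪ k^(-μ)` for infinitely many `(m, k)`.
Since `(m, k) ↦ (m, -k)` swaps the two coordinates, each coordinate is controlled by the
approximation properties of the single number `α`. The larger coordinate of a nonzero point is
`‖x‖ ≫ |k|` and the smaller is `≫ |k|^(-μ)`, so `Π(x)² ≫ ‖x‖^(1-μ) = ‖x‖^(-2γ)`, and this is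
attained up to a constant along the good approximations.

The number `α` is the limit of a continued fraction with minus signs,
`q (n+2) = a * q (n+1) - q n`, `p (n+2) = a * p (n+1) - p n`, with `a ≈ q (n+1) ^ (μ - 1)`.
Then `p (n+1) * q n - p n * q (n+1) = 1`, so `p n / q n` increases to `α` and
`q n * α - p n` is between `1 / q (n+1)` and `2 / q (n+1)`, where `q (n+1) ≍ q n ^ μ`.
Any other fraction `m / k` with `q n ≲ k ≲ q (n+1)` satisfies `|m - kα| ≫ 1 / k`, because
`|m * q n - k * p n| ≥ 1` (`approx_lower`).
-/

open MeasureTheory Filter Set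

noncomputable section

/-! ### A real number with prescribed quality of approximation -/

/-- States of the recurrence: `(p n, q n, p (n+1), q (n+1))`. The partial quotient
`⌈q (n+1) ^ (μ - 1)⌉ + 3` makes `q (n+2)` comparable to `q (n+1) ^ μ` and at least
`2 * q (n+1)`. -/
def cfState (μ : ℝ) : ℕ → ℤ × ℤ × ℤ × ℤ
  | 0 => (-1, 0, 0, 1)
  | n + 1 =>
    let s := cfState μ n
    let a : ℤ := ⌈(s.2.2.2 : ℝ) ^ (μ - 1)⌉ + 3
    (s.2.2.1, s.2.2.2, a * s.2.2.1 - s.1, a * s.2.2.2 - s.2.1)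

/-- The last two conjuncts are `q (n+1) ≍ q n ^ μ`; the determinant is `1` because it is preserved
by the recurrence. -/
lemma exists_cf (μ : ℝ) (hμ : 1 ≤ μ) : ∃ p q : ℕ → ℤ, p 0 = 0 ∧ q 0 = 1 ∧ (∀ n, 1 ≤ q n) ∧
    (∀ n, 2 * q n ≤ q (n + 1)) ∧ (∀ n, p (n + 1) * q n - p n * q (n + 1) = 1) ∧
    (∀ n, (q n : ℝ) ^ μ ≤ q (n + 1)) ∧ ∀ n, (q (n + 1) : ℝ) ≤ 5 * (q n : ℝ) ^ μ := by
  have inv : ∀ n, 0 ≤ (cfState μ n).2.1 ∧ (cfState μ n).2.1 ≤ (cfState μ n).2.2.2 ∧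
      1 ≤ (cfState μ n).2.2.2 ∧
      (cfState μ n).2.2.1 * (cfState μ n).2.1 - (cfState μ n).1 * (cfState μ n).2.2.2 = 1 := by
    intro n
    induction n with
    | zero => simp [cfState]
    | succ n ih =>
      obtain ⟨h0, h1, h2, h3⟩ := ih
      have ha : (0 : ℤ) ≤ ⌈((cfState μ n).2.2.2 : ℝ) ^ (μ - 1)⌉ :=
        Int.ceil_nonneg (Real.rpow_nonneg (by exact_mod_cast (by omega : (0:ℤ) ≤ _)) _)
      simp only [cfState]
      refine ⟨by omega, by nlinarith, by nlinarith, by linarith⟩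
  refine ⟨fun n => (cfState μ n).2.2.1, fun n => (cfState μ n).2.2.2, rfl, rfl,
    fun n => (inv n).2.2.1, fun n => ?_, fun n => (inv (n + 1)).2.2.2, fun n => ?_, fun n => ?_⟩
  · obtain ⟨h0, h1, h2, h3⟩ := inv n
    have ha : (0 : ℤ) ≤ ⌈((cfState μ n).2.2.2 : ℝ) ^ (μ - 1)⌉ :=
      Int.ceil_nonneg (Real.rpow_nonneg (by exact_mod_cast (by omega : (0:ℤ) ≤ _)) _)
    simp only [cfState]
    nlinarith
  all_goals
    obtain ⟨h0, h1, h2, h3⟩ := inv n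
    simp only [cfState]
    generalize (cfState μ n).2.2.2 = Q at *
    generalize (cfState μ n).2.1 = Q' at *
    have hQ : (1 : ℝ) ≤ Q := by exact_mod_cast h2
    have hQ1 : (0 : ℝ) ≤ Q' := by exact_mod_cast h0
    have hQ2 : (Q' : ℝ) ≤ Q := by exact_mod_cast h1
    have e : (Q : ℝ) ^ μ = (Q : ℝ) ^ (μ - 1) * Q := by
      rw [← Real.rpow_add_one (by positivity)]; congr 1; ring
    have h1 : (1 : ℝ) ≤ (Q : ℝ) ^ (μ - 1) := Real.one_le_rpow hQ (by linarith)
    have c1 := Int.le_ceil ((Q : ℝ) ^ (μ - 1))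
    have c2 := Int.ceil_lt_add_one ((Q : ℝ) ^ (μ - 1))
    push_cast
    rw [e]
    nlinarith

/-- The limit `α` of the fractions `p n / q n`. -/
lemma exists_limit (p q : ℕ → ℤ) (hq : ∀ n, 1 ≤ q n) (h2 : ∀ n, 2 * q n ≤ q (n + 1))
    (hd : ∀ n, p (n + 1) * q n - p n * q (n + 1) = 1) :
    ∃ α : ℝ, ∀ n, 1 / (q (n + 1) : ℝ) ≤ q n * α - p n ∧
      q n * α - p n ≤ 2 / (q (n + 1) : ℝ) := by
  have hq' : ∀ n, (0 : ℝ) < q n := fun n => by exact_mod_cast (by have := hq n; omega : 0 < q n)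
  have h2' : ∀ n, 2 * (q n : ℝ) ≤ q (n + 1) := fun n => by exact_mod_cast h2 n
  have hd' : ∀ n, (p (n + 1) : ℝ) * q n - p n * q (n + 1) = 1 := fun n => by exact_mod_cast hd n
  have step : ∀ n, (p (n + 1) : ℝ) / q (n + 1) = p n / q n + 1 / (q n * q (n + 1)) := by
    intro n
    have := hq' n; have := hq' (n + 1)
    field_simp
    linarith [hd' n]
  let x : ℕ → ℝ := fun n => p n / q n
  let y : ℕ → ℝ := fun n => p n / q n + 2 / (q n * q (n + 1))
  have hx : Monotone x := monotone_nat_of_le_succ fun n => by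
    have := hq' n; have := hq' (n + 1)
    simp only [x, step]
    have : 0 < 1 / ((q n : ℝ) * q (n + 1)) := by positivity
    linarith
  have hy : Antitone y := antitone_nat_of_succ_le fun n => by
    have h0 := hq' n; have h1 := hq' (n + 1); have h2 := hq' (n + 2)
    simp only [y, step]
    have : 2 / ((q (n + 1) : ℝ) * q (n + 1 + 1)) ≤ 1 / ((q n : ℝ) * q (n + 1)) := by
      rw [div_le_div_iff₀ (by positivity) (by positivity)]
      nlinarith [h2' n, h2' (n + 1), mul_pos h0 h1]
    have e : 2 / ((q n : ℝ) * q (n + 1)) = 2 * (1 / ((q n : ℝ) * q (n + 1))) := by ring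
    linarith
  have hxy : x ≤ y := fun n => by
    have := hq' n; have := hq' (n + 1)
    simp only [x, y]
    have : 0 < 2 / ((q n : ℝ) * q (n + 1)) := by positivity
    linarith
  have hmem := hx.ciSup_mem_iInter_Icc_of_antitone hy hxy
  rw [Set.mem_iInter] at hmem
  refine ⟨⨆ n, x n, fun n => ?_⟩
  have a1 := (hmem (n + 1)).1
  have a2 := (hmem n).2
  generalize (⨆ n, x n) = α at *
  have h0 := hq' n; have h1 := hq' (n + 1)
  simp only [x, y, step] at a1 a2
  have e1 : (q n : ℝ) * (p n / q n + 1 / (q n * q (n + 1))) = p n + 1 / q (n + 1) := by field_simp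
  have e2 : (q n : ℝ) * (p n / q n + 2 / (q n * q (n + 1))) = p n + 2 / q (n + 1) := by field_simp
  have b1 := mul_le_mul_of_nonneg_left a1 h0.le
  have b2 := mul_le_mul_of_nonneg_left a2 h0.le
  constructor <;> linarith

lemma natCast_le_of_doubling (q : ℕ → ℤ) (hq : ∀ n, 1 ≤ q n) (h2 : ∀ n, 2 * q n ≤ q (n + 1))
    (n : ℕ) : (n : ℤ) ≤ q n := by
  induction n with
  | zero => have := hq 0; push_cast; omega
  | succ n ih => have := h2 n; have := hq n; push_cast; omega

/-- No fraction approximates `α` with an exponent better than `μ`. -/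
lemma approx_lower (μ : ℝ) (hμ : 1 ≤ μ) (p q : ℕ → ℤ) (q0 : q 0 = 1) (hq : ∀ n, 1 ≤ q n)
    (h2 : ∀ n, 2 * q n ≤ q (n + 1)) (h5 : ∀ n, (q (n + 1) : ℝ) ≤ 5 * (q n : ℝ) ^ μ) (α : ℝ)
    (hα : ∀ n, 1 / (q (n + 1) : ℝ) ≤ q n * α - p n ∧ q n * α - p n ≤ 2 / (q (n + 1) : ℝ)) :
    ∃ c : ℝ, 0 < c ∧ ∀ m k : ℤ, 1 ≤ k → c * (k : ℝ) ^ (-μ) ≤ |m - k * α| := by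
  have hq' : ∀ n, (0 : ℝ) < q n := fun n => by exact_mod_cast (by have := hq n; omega : 0 < q n)
  have hgrow := natCast_le_of_doubling q hq h2
  refine ⟨1 / (20 * 4 ^ μ), by positivity, fun m k hk => ?_⟩
  have hk' : (1 : ℝ) ≤ k := by exact_mod_cast hk
  have hk0 : (0 : ℝ) < k := by linarith
  obtain ⟨n, hn1, hn2⟩ : ∃ n, 4 * k ≤ q (n + 1) ∧ q n < 4 * k := by
    have hex : ∃ n, 4 * k ≤ q n := ⟨(4 * k).toNat, by have := hgrow (4 * k).toNat; omega⟩
    classical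
    -- the least index with `4 * k ≤ q n` is positive since `q 0 = 1`
    have hne : Nat.find hex ≠ 0 := by
      intro h
      have := Nat.find_spec hex
      rw [h, q0] at this
      omega
    obtain ⟨n, hn⟩ := Nat.exists_eq_succ_of_ne_zero hne
    refine ⟨n, ?_, ?_⟩
    · have := Nat.find_spec hex
      rwa [hn] at this
    · have := Nat.find_min hex (m := n) (by omega)
      omega
  have hn1' : 4 * (k : ℝ) ≤ q (n + 1) := by exact_mod_cast hn1
  have hn2' : (q n : ℝ) < 4 * k := by exact_mod_cast hn2
  have h0 := hq' n
  have h1 := hq' (n + 1)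
  obtain ⟨d1, d2⟩ := hα n
  have hd0 : 0 < q n * α - p n := lt_of_lt_of_le (by positivity) d1
  have e : (m : ℝ) * q n - k * p n = q n * (m - k * α) + k * (q n * α - p n) := by ring
  have h4 : (1 : ℝ) ≤ 4 ^ μ := Real.one_le_rpow (by norm_num) (by linarith)
  have hkμ : (k : ℝ) ≤ (k : ℝ) ^ μ := by
    simpa using Real.rpow_le_rpow_of_exponent_le hk' hμ
  rw [Real.rpow_neg hk0.le, ← div_eq_mul_inv, div_div]
  by_cases hprop : m * q n - k * p n = 0
  · -- here `m / k = p n / q n`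
    have hp' : (m : ℝ) * q n - k * p n = 0 := by exact_mod_cast hprop
    have e2 : (q n : ℝ) * |m - k * α| = k * (q n * α - p n) := by
      have e3 : (q n : ℝ) * (m - k * α) = -(k * (q n * α - p n)) := by linarith
      have e4 := congrArg abs e3
      rwa [abs_mul, abs_of_pos h0, abs_neg, abs_of_pos (mul_pos hk0 hd0)] at e4
    have hlow : 1 / (4 * (q (n + 1) : ℝ)) ≤ |m - k * α| := by
      have : (1 / 4) * (1 / (q (n + 1) : ℝ)) ≤ |m - k * α| := by
        by_contra! hcon
        have := mul_lt_mul_of_pos_left hcon h0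
        have := mul_le_mul_of_nonneg_left d1 hk0.le
        have h1' : 0 < 1 / (q (n + 1) : ℝ) := by positivity
        have := mul_lt_mul_of_pos_right hn2' h1'
        linarith
      calc _ = (1 / 4) * (1 / (q (n + 1) : ℝ)) := by ring
        _ ≤ _ := this
    refine le_trans ?_ hlow
    apply one_div_le_one_div_of_le (by positivity)
    have : (q n : ℝ) ^ μ ≤ (4 * k) ^ μ := Real.rpow_le_rpow h0.le hn2'.le (by linarith)
    rw [Real.mul_rpow (by norm_num) hk0.le] at this
    linarith [h5 n]
  · -- a nonzero integer is at least `1` in absolute value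
    have h1le : (1 : ℝ) ≤ |(m : ℝ) * q n - k * p n| := by
      exact_mod_cast Int.one_le_abs hprop
    have hsmall : k * (q n * α - p n) ≤ 1 / 2 := by
      calc k * (q n * α - p n) ≤ k * (2 / q (n + 1)) := by gcongr
        _ ≤ 1 / 2 := by rw [mul_div_assoc', div_le_iff₀ h1]; linarith
    rw [e] at h1le
    have t := abs_add_le (q n * (m - k * α)) (k * (q n * α - p n))
    rw [abs_mul, abs_of_pos h0, abs_of_pos (mul_pos hk0 hd0)] at t
    have hb : 1 / (8 * (k : ℝ)) ≤ |m - k * α| := by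
      rw [div_le_iff₀ (by positivity)]
      nlinarith [abs_nonneg (m - k * α)]
    refine le_trans ?_ hb
    apply one_div_le_one_div_of_le (by positivity)
    nlinarith

/-! ### The lattice attached to `α` -/

/-- The point `(m - kα, m + kα)`. -/
def pt (α : ℝ) (m k : ℤ) : Fin 2 → ℝ := ![m - k * α, m + k * α]

/-- The lattice of all points `(m - kα, m + kα)`. -/
def ptLattice (α : ℝ) : Set (Fin 2 → ℝ) := {x | ∃ m k : ℤ, x = pt α m k}

lemma norm_fin_two (x : Fin 2 → ℝ) : ‖x‖ = max |x 0| |x 1| := by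
  apply le_antisymm
  · rw [pi_norm_le_iff_of_nonneg (le_max_of_le_left (abs_nonneg _))]
    intro i
    fin_cases i <;> simp
  · exact max_le (norm_le_pi_norm x 0) (norm_le_pi_norm x 1)

lemma isFullLattice_ptLattice {α : ℝ} (hα : 0 < α) : IsFullLattice (ptLattice α) := by
  refine ⟨![![1, 1], ![-α, α]], ?_, ?_⟩
  · rw [LinearIndependent.pair_iff]
    intro s t h
    have h0 := congrFun h 0
    have h1 := congrFun h 1
    simp at h0 h1
    have ht : t * α = 0 := by linarith
    have : t = 0 := by simpa [hα.ne'] using ht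
    subst this
    simpa using h0
  · ext x
    constructor
    · rintro ⟨m, k, rfl⟩
      refine ⟨![m, k], ?_⟩
      ext i
      fin_cases i <;> simp [pt, Fin.sum_univ_two] <;> ring
    · rintro ⟨z, rfl⟩
      refine ⟨z 0, z 1, ?_⟩
      ext i
      fin_cases i <;> simp [pt, Fin.sum_univ_two] <;> ring

lemma pt_bounds {α : ℝ} (hα : 0 < α) (m k : ℤ) :
    |(m : ℝ)| ≤ ‖pt α m k‖ ∧ α * |(k : ℝ)| ≤ ‖pt α m k‖ := by
  have h0 := norm_le_pi_norm (pt α m k) 0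
  have h1 := norm_le_pi_norm (pt α m k) 1
  simp only [pt, Real.norm_eq_abs, Matrix.cons_val_zero, Matrix.cons_val_one] at h0 h1
  rw [abs_le] at h0 h1
  change _ ≤ ‖![(m : ℝ) - k * α, m + k * α]‖ ∧ _ ≤ ‖![(m : ℝ) - k * α, m + k * α]‖
  refine ⟨abs_le.2 ⟨by linarith, by linarith⟩, ?_⟩
  rw [← abs_of_pos hα, ← abs_mul, abs_of_pos hα]
  exact abs_le.2 ⟨by linarith, by linarith⟩

lemma finite_ball {α : ℝ} (hα : 0 < α) (R : ℝ) : {x ∈ ptLattice α | ‖x‖ ≤ R}.Finite := by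
  obtain ⟨N, hN⟩ := exists_nat_ge (max R (R / α))
  have hN1 := (le_max_left _ _).trans hN
  have hN2 := (le_max_right _ _).trans hN
  refine (((Set.finite_Icc (-(N : ℤ)) N).prod (Set.finite_Icc (-(N : ℤ)) N)).image
    (fun z => pt α z.1 z.2)).subset ?_
  rintro x ⟨⟨m, k, rfl⟩, hx⟩
  obtain ⟨b1, b2⟩ := pt_bounds hα m k
  refine ⟨(m, k), ⟨?_, ?_⟩, rfl⟩
  · have : |(m : ℝ)| ≤ N := by linarith
    rw [Set.mem_Icc, ← abs_le]
    exact_mod_cast this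
  · have : |(k : ℝ)| ≤ N := by
      refine le_trans ?_ hN2
      rw [le_div_iff₀ hα]; linarith
    rw [Set.mem_Icc, ← abs_le]
    exact_mod_cast this

/-- `Π(x)² ≫ ‖x‖^(1 - μ)` on the nonzero points of the lattice. -/
lemma prod_lower {μ α c : ℝ} (hμ : 1 ≤ μ) (hα : 0 < α) (hc : 0 < c)
    (h : ∀ m k : ℤ, 1 ≤ k → c * (k : ℝ) ^ (-μ) ≤ |m - k * α|) :
    ∃ C : ℝ, 0 < C ∧ ∀ x ∈ ptLattice α, x ≠ 0 → C * ‖x‖ ^ (1 - μ) ≤ |x 0| * |x 1| := by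
  refine ⟨min 1 (c * α ^ μ), lt_min one_pos (by positivity), ?_⟩
  rintro x ⟨m, k, rfl⟩ hx
  have hpos : 0 < ‖pt α m k‖ := norm_pos_iff.2 hx
  have hmm : |pt α m k 0| * |pt α m k 1|
      = ‖pt α m k‖ * min |pt α m k 0| |pt α m k 1| := by
    rw [norm_fin_two, max_mul_min]
  rcases eq_or_ne k 0 with rfl | hk
  · have hn : ‖pt α m 0‖ = |(m : ℝ)| := by simp [norm_fin_two, pt]
    have hm0 : m ≠ 0 := by
      rintro rfl
      simp [hn] at hpos
    have hm : (1 : ℝ) ≤ |(m : ℝ)| := by exact_mod_cast Int.one_le_abs hm0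
    have h1 : ‖pt α m 0‖ ^ (1 - μ) ≤ 1 := by
      rw [hn]; exact Real.rpow_le_one_of_one_le_of_nonpos hm (by linarith)
    have h2 : (0 : ℝ) ≤ ‖pt α m 0‖ ^ (1 - μ) := by positivity
    have h3 : |pt α m 0 0| * |pt α m 0 1| = |(m : ℝ)| * |(m : ℝ)| := by simp [pt]
    rw [h3]
    nlinarith [min_le_left 1 (c * α ^ μ)]
  · have hk1 : (1 : ℝ) ≤ |(k : ℝ)| := by exact_mod_cast Int.one_le_abs hk
    have hb := (pt_bounds hα m k).2
    have key : c * |(k : ℝ)| ^ (-μ) ≤ min |pt α m k 0| |pt α m k 1| := by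
      rcases lt_or_gt_of_ne hk with hneg | hpos
      · have e : |(k : ℝ)| = ((-k : ℤ) : ℝ) := by
          rw [abs_of_neg (by exact_mod_cast hneg)]; push_cast; ring
        rw [e]
        apply le_min
        · refine (h (-m) (-k) (by omega)).trans_eq ?_
          rw [← abs_neg]; simp [pt]; congr 1; ring
        · refine (h m (-k) (by omega)).trans_eq ?_
          simp [pt]
      · have e : |(k : ℝ)| = k := abs_of_pos (by exact_mod_cast hpos)
        rw [e]
        apply le_min
        · exact (h m k (by omega)).trans_eq (by simp [pt])
        · refine (h (-m) k (by omega)).trans_eq ?_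
          rw [← abs_neg]; simp [pt]; congr 1; ring
    rw [hmm]
    have h1 : (‖pt α m k‖ / α) ^ (-μ) ≤ |(k : ℝ)| ^ (-μ) := by
      apply Real.rpow_le_rpow_of_nonpos (by positivity) _ (by linarith)
      rw [le_div_iff₀ hα]; linarith
    have h2 : ‖pt α m k‖ ^ (1 - μ) = ‖pt α m k‖ * ‖pt α m k‖ ^ (-μ) := by
      rw [sub_eq_add_neg, Real.rpow_add hpos, Real.rpow_one]
    have h3 : (‖pt α m k‖ / α) ^ (-μ) = ‖pt α m k‖ ^ (-μ) * α ^ μ := by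
      rw [Real.div_rpow hpos.le hα.le, Real.rpow_neg hα.le, div_inv_eq_mul]
    calc min 1 (c * α ^ μ) * ‖pt α m k‖ ^ (1 - μ)
        ≤ (c * α ^ μ) * ‖pt α m k‖ ^ (1 - μ) := by gcongr; exact min_le_right _ _
      _ = ‖pt α m k‖ * (c * (‖pt α m k‖ / α) ^ (-μ)) := by rw [h2, h3]; ring
      _ ≤ ‖pt α m k‖ * min |pt α m k 0| |pt α m k 1| := by
        gcongr
        exact le_trans (by gcongr) key

/-! ### Computing the exponent -/

/-- The defining inequality `Π(x) ≤ ‖x‖^(-γ)` in dimension two, squared. -/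
lemma cond_iff (x : Fin 2 → ℝ) (g : ℝ) :
    (∏ i, |x i|) ^ ((1 : ℝ) / (2 : ℕ)) ≤ ‖x‖ ^ (-g) ↔ |x 0| * |x 1| ≤ ‖x‖ ^ (-(2 * g)) := by
  rw [Fin.prod_univ_two]
  have e : ‖x‖ ^ (-g) = (‖x‖ ^ (-(2 * g))) ^ ((1 : ℝ) / (2 : ℕ)) := by
    rw [← Real.rpow_mul (norm_nonneg x)]; congr 1; push_cast; ring
  rw [e]
  exact Real.rpow_le_rpow_iff (by positivity) (by positivity) (by norm_num)

/-- An inequality `Π(x) ≤ ‖x‖^(-g)` with `g > γ` contradicts the lower bound for `Π` once `‖x‖` is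
large, so its solutions lie in a ball. -/
lemma exponent_upper {γ g α C : ℝ} (hα : 0 < α) (hC : 0 < C)
    (h : ∀ x ∈ ptLattice α, x ≠ 0 → C * ‖x‖ ^ (-(2 * γ)) ≤ |x 0| * |x 1|) (hg : γ < g) :
    {x : Fin 2 → ℝ | x ∈ ptLattice α ∧
      (∏ i, |x i|) ^ ((1 : ℝ) / (2 : ℕ)) ≤ ‖x‖ ^ (-g)}.Finite := by
  refine (finite_ball hα ((1 / C) ^ (2 * (g - γ))⁻¹)).subset ?_
  rintro x ⟨hx, hle⟩
  refine ⟨hx, ?_⟩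
  rcases eq_or_ne x 0 with rfl | h0
  · rw [norm_zero]; positivity
  have hpos : 0 < ‖x‖ := norm_pos_iff.2 h0
  have h1 := (h x hx h0).trans ((cond_iff x g).1 hle)
  have e : ‖x‖ ^ (-(2 * γ)) = ‖x‖ ^ (-(2 * g)) * ‖x‖ ^ (2 * (g - γ)) := by
    rw [← Real.rpow_add hpos]; congr 1; ring
  have hp : 0 < ‖x‖ ^ (-(2 * g)) := by positivity
  have h2 : ‖x‖ ^ (2 * (g - γ)) ≤ 1 / C := by
    rw [le_div_iff₀ hC]
    rw [e] at h1
    by_contra! hcon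
    nlinarith
  exact (Real.le_rpow_inv_iff_of_pos hpos.le (by positivity) (by linarith)).2 h2

/-- For `g < γ`, the points `(p n - q n * α, p n + q n * α)` satisfy `Π(x) ≤ ‖x‖^(-g)` for all
large `n`. -/
lemma exponent_lower {γ g α : ℝ} (hα : 0 < α) (hg0 : 0 ≤ g) (hg : g < γ)
    (p q : ℕ → ℤ) (hq : ∀ n, 1 ≤ q n) (h2 : ∀ n, 2 * q n ≤ q (n + 1))
    (hgr : ∀ n, (q n : ℝ) ^ (1 + 2 * γ) ≤ q (n + 1))
    (h : ∀ n, 1 / (q (n + 1) : ℝ) ≤ q n * α - p n ∧ q n * α - p n ≤ 2 / (q (n + 1) : ℝ)) :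
    {x : Fin 2 → ℝ | x ∈ ptLattice α ∧
      (∏ i, |x i|) ^ ((1 : ℝ) / (2 : ℕ)) ≤ ‖x‖ ^ (-g)}.Infinite := by
  have hq' : ∀ n, (1 : ℝ) ≤ q n := fun n => by exact_mod_cast hq n
  have hmono : StrictMono q := strictMono_nat_of_lt_succ fun n => by
    have := hq n; have := h2 n; omega
  have htop : Tendsto (fun n => (q n : ℝ)) atTop atTop :=
    tendsto_atTop_mono (fun n => by exact_mod_cast natCast_le_of_doubling q hq h2 n)
      tendsto_natCast_atTop_atTop
  set D : ℝ := 2 + 2 * α with hD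
  have hDpos : 0 < D := by positivity
  have hev : ∀ᶠ n in atTop, 2 * D * D ^ (2 * g) ≤ (q n : ℝ) ^ (2 * (γ - g)) :=
    ((tendsto_rpow_atTop (by linarith : 0 < 2 * (γ - g))).comp htop).eventually_ge_atTop _
  obtain ⟨N, hN⟩ := eventually_atTop.1 hev
  refine Set.infinite_of_injective_forall_mem (f := fun n : ℕ => pt α (p (n + N)) (q (n + N)))
    ?_ ?_
  · intro a b hab
    have h0 := congrFun hab 0
    have h1 := congrFun hab 1
    simp only [pt, Matrix.cons_val_zero, Matrix.cons_val_one] at h0 h1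
    have : (q (a + N) : ℝ) * α = q (b + N) * α := by linarith
    have : (q (a + N) : ℝ) = q (b + N) := mul_right_cancel₀ hα.ne' this
    have := hmono.injective (by exact_mod_cast this : q (a + N) = q (b + N))
    omega
  · intro n
    refine ⟨⟨_, _, rfl⟩, ?_⟩
    rw [cond_iff]
    have hNn := hN (n + N) (by omega)
    obtain ⟨d1, d2⟩ := h (n + N)
    have hQ := hq' (n + N)
    have hQ1 := hq' (n + N + 1)
    have hgrn := hgr (n + N)
    generalize n + N = j at *
    have hQ0 : (0 : ℝ) < q j := by linarith
    have hd0 : 0 < q j * α - p j := lt_of_lt_of_le (by positivity) d1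
    have hd2 : 2 / (q (j + 1) : ℝ) ≤ 2 := by
      rw [div_le_iff₀ (by linarith)]; linarith
    have e0 : |pt α (p j) (q j) 0| = q j * α - p j := by
      simp only [pt, Matrix.cons_val_zero]
      rw [abs_sub_comm, abs_of_pos hd0]
    have e1 : |pt α (p j) (q j) 1| ≤ D * q j := by
      simp only [pt, Matrix.cons_val_one, Matrix.cons_val_zero]
      have := mul_pos hQ0 hα
      rw [abs_le]
      constructor <;> nlinarith
    have hn : ‖pt α (p j) (q j)‖ ≤ D * q j := by
      rw [norm_fin_two, e0]
      exact max_le (by nlinarith [mul_pos hQ0 hα]) e1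
    have hpos : 0 < ‖pt α (p j) (q j)‖ :=
      lt_of_lt_of_le (e0 ▸ hd0 : 0 < |pt α (p j) (q j) 0|) (norm_le_pi_norm (pt α (p j) (q j)) 0)
    have hlow : (D * q j) ^ (-(2 * g)) ≤ ‖pt α (p j) (q j)‖ ^ (-(2 * g)) :=
      Real.rpow_le_rpow_of_nonpos hpos hn (by linarith)
    refine le_trans ?_ hlow
    have hd3 : q j * α - p j ≤ 2 * (q j : ℝ) ^ (-(1 + 2 * γ)) := by
      refine d2.trans ?_
      rw [Real.rpow_neg hQ0.le, ← div_eq_mul_inv]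
      gcongr
    have e2 : (q j : ℝ) ^ (-(1 + 2 * γ)) * q j * (q j : ℝ) ^ (2 * (γ - g))
        = (q j : ℝ) ^ (-(2 * g)) := by
      rw [← Real.rpow_add_one hQ0.ne', ← Real.rpow_add hQ0]; congr 1; ring
    have e3 : D ^ (2 * g) * D ^ (-(2 * g)) = 1 := by
      rw [← Real.rpow_add hDpos]; simp
    have hDm : 0 < D ^ (-(2 * g)) := by positivity
    have hA : 0 < (q j : ℝ) ^ (-(1 + 2 * γ)) * q j := by positivity
    rw [e0]
    calc (q j * α - p j) * |pt α (p j) (q j) 1|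
        ≤ (2 * (q j : ℝ) ^ (-(1 + 2 * γ))) * (D * q j) := by gcongr
      _ = ((q j : ℝ) ^ (-(1 + 2 * γ)) * q j * D ^ (-(2 * g))) * (2 * D * D ^ (2 * g)) := by
          linear_combination (-2 * D * (q j : ℝ) ^ (-(1 + 2 * γ)) * q j) * e3
      _ ≤ ((q j : ℝ) ^ (-(1 + 2 * γ)) * q j * D ^ (-(2 * g))) * (q j : ℝ) ^ (2 * (γ - g)) := by
          gcongr
      _ = (D * q j) ^ (-(2 * g)) := by
          rw [Real.mul_rpow hDpos.le hQ0.le, ← e2]; ring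

/-- With `α = 1` the lattice contains the points `(0, 2m)`, for which `Π` vanishes. -/
lemma exponent_top : latticeExponent 2 (ptLattice 1) = ⊤ := by
  refine ENNReal.eq_top_of_forall_nnreal_le fun r => le_sSup ⟨r, r.2, by simp, ?_⟩
  refine Set.infinite_of_injective_forall_mem (f := fun n : ℕ => pt 1 n n) ?_ ?_
  · intro a b hab
    have h1 := congrFun hab 1
    simp only [pt, Matrix.cons_val_one, Matrix.cons_val_zero, Int.cast_natCast] at h1
    have : (a : ℝ) = b := by linarith
    exact_mod_cast this
  · intro n
    refine ⟨⟨_, _, rfl⟩, ?_⟩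
    rw [cond_iff]
    have : pt 1 n n 0 = 0 := by simp [pt]
    rw [this, abs_zero, zero_mul]
    positivity

/-- **Statement 0.** For `d = 2` and every `γ ∈ [0, +∞]` there is a full-rank lattice
`Λ ⊂ ℝ^d` with `ω(Λ) = γ`; i.e. `S_d = [0, +∞]`. -/
theorem spectrum_two_eq_Icc_zero_top (γ : ENNReal) :
    ∃ Λ : Set (Fin 2 → ℝ), IsFullLattice Λ ∧ latticeExponent 2 Λ = γ := by
  rcases eq_or_ne γ ⊤ with rfl | hγ
  · exact ⟨ptLattice 1, isFullLattice_ptLattice one_pos, exponent_top⟩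
  lift γ to NNReal using hγ
  have hμ : (1 : ℝ) ≤ 1 + 2 * γ := by have := γ.2; simp
  obtain ⟨p, q, p0, q0, hq, h2, hd, hg1, hg2⟩ := exists_cf (1 + 2 * γ) hμ
  obtain ⟨α, hα⟩ := exists_limit p q hq h2 hd
  have hα0 : 0 < α := by
    have h := (hα 0).1
    have h1 : (0 : ℝ) < q (0 + 1) := by exact_mod_cast (by have := hq (0 + 1); omega)
    rw [p0, q0] at h
    have := one_div_pos.2 h1
    push_cast at h
    linarith
  obtain ⟨c, hc, hlow⟩ := approx_lower _ hμ p q q0 hq h2 hg2 α hα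
  obtain ⟨C, hC, hprod⟩ := prod_lower hμ hα0 hc hlow
  refine ⟨ptLattice α, isFullLattice_ptLattice hα0, le_antisymm ?_ ?_⟩
  · refine sSup_le ?_
    rintro _ ⟨g, hg0, rfl, hinf⟩
    rw [ENNReal.ofReal_le_coe]
    by_contra! hcon
    refine hinf (exponent_upper hα0 hC (γ := γ) (fun x hx h0 => ?_) hcon)
    have := hprod x hx h0
    rwa [show 1 - (1 + 2 * (γ : ℝ)) = -(2 * γ) by ring] at this
  · refine le_of_forall_lt_imp_le_of_dense fun a ha => ?_
    lift a to NNReal using ne_top_of_lt ha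
    refine le_sSup ⟨a, a.2, by simp, ?_⟩
    exact exponent_lower hα0 a.2 (by exact_mod_cast ha) p q hq h2 hg1 hα
end
end
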